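/- Part (i) of the Obukhov–Corrsin dichotomy (quantitative Constantin–E–Titi-type bound): let α, ᾱ ∈ (0,1) with α + 2ᾱ − 1 > 0, and let u : [0,1]×T^d → ℝ^d be a continuous divergence-free vector field with ‖u(t,·)‖_{C^0} + sup_{x≠y} |u(t,x)−u(t,y)|/|x−y|^α ≤ A for all t. There is a constant C = C(d, α, ᾱ) such that for every κ ∈ (0,1] and every solution θ^κ of ∂_t θ^κ + u·∇θ^κ = κΔθ^κ satisfying the uniform Hölder bound sup_t ( ‖θ^κ(t,·)‖_{C^0} + sup_{x≠y} |θ^κ(t,x)−θ^κ(t,y)|/|x−y|^{ᾱ} ) ≤ H, one has κ ∫_0^1 ‖∇θ^κ(t,·)‖²_{L²(T^d)} dt ≤ C κ^{(α+2ᾱ−1)/(α+1)} (1 + A)^{2(1−ᾱ)/(α+1)} H². In particular, if a family of solutions (θ^κ) is uniformly bounded in L^∞_t C^{ᾱ}_x with ᾱ > (1−α)/2, then there is no anomalous diffusion: lim_{κ→0} κ ∫_0^1 ‖∇θ^κ(t,·)‖²_{L²} dt = 0. -/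

import Mathlib

open MeasureTheory Real Topology Filter

noncomputable section

/-- Spatial partial derivative `∂_i f` (via the Fréchet derivative). -/
def pd {d : ℕ} (f : (Fin d → ℝ) → ℝ) (i : Fin d) (x : Fin d → ℝ) : ℝ :=
  fderiv ℝ f x (Pi.single i 1)

/-- The unit box `[0,1]^d`, a fundamental domain for the torus `T^d = ℝ^d/ℤ^d`. -/
def box (d : ℕ) : Set (Fin d → ℝ) := Set.Icc 0 1

/-- `ℤ^d`-periodicity in the space variable (functions on the torus `T^d`). -/
def SpacePeriodic {d : ℕ} (f : (Fin d → ℝ) → ℝ) : Prop :=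
  ∀ (x : Fin d → ℝ) (k : Fin d → ℤ), f (x + fun i => (k i : ℝ)) = f x

/-- Squared length of the spatial gradient, `|∇f|²(x)`. -/
def gradSq {d : ℕ} (f : (Fin d → ℝ) → ℝ) (x : Fin d → ℝ) : ℝ :=
  ∑ i, (pd f i x) ^ 2

/-- Squared `L²(T^d)` norm. -/
def l2sq {d : ℕ} (f : (Fin d → ℝ) → ℝ) : ℝ := ∫ x in box d, (f x) ^ 2

/-- The dissipation `∫_0^t ‖∇θ(s,·)‖²_{L²(T^d)} ds`. -/
def dissipUpTo {d : ℕ} (θ : ℝ → (Fin d → ℝ) → ℝ) (t : ℝ) : ℝ :=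
  ∫ s in Set.Icc (0:ℝ) t, ∫ x in box d, gradSq (θ s) x

/-- The dissipation `∫_0^1 ∫_{T^d} |∇θ|² dx dt`. -/
def dissip {d : ℕ} (θ : ℝ → (Fin d → ℝ) → ℝ) : ℝ := dissipUpTo θ 1

/-- A solution of the advection–diffusion equation `∂_t θ + u·∇θ = κΔθ` on
`(0,1] × T^d` with initial datum `θ_in`: continuous on `[0,1] × T^d`, spatially
periodic, `C¹` in time and `C²` in space on `(0,1] × T^d`, solving the equation
pointwise there. -/
structure IsAdvDiffSol {d : ℕ} (u : ℝ → (Fin d → ℝ) → Fin d → ℝ) (κ : ℝ)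
    (θin : (Fin d → ℝ) → ℝ) (θ : ℝ → (Fin d → ℝ) → ℝ) : Prop where
  periodic : ∀ t, SpacePeriodic (θ t)
  cont : ContinuousOn (fun p : ℝ × (Fin d → ℝ) => θ p.1 p.2)
    (Set.Icc 0 1 ×ˢ Set.univ)
  init : ∀ x, θ 0 x = θin x
  timeDiff : ∀ t ∈ Set.Ioc (0:ℝ) 1, ∀ x, DifferentiableAt ℝ (fun s => θ s x) t
  spaceC2 : ∀ t ∈ Set.Ioc (0:ℝ) 1, ContDiff ℝ 2 (θ t)
  eqn : ∀ t ∈ Set.Ioc (0:ℝ) 1, ∀ x,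
    deriv (fun s => θ s x) t + ∑ i, u t x i * pd (θ t) i x
      = κ * ∑ i, pd (pd (θ t) i) i x

/-- `u ∈ C^0_t C^α_x ∩ C^α_t C^0_x` on `[0,1] × T^d`: continuity plus uniform
Hölder bounds in space and in time. -/
def HolderVF {d : ℕ} (α : ℝ) (u : ℝ → (Fin d → ℝ) → Fin d → ℝ) : Prop :=
  Continuous (fun p : ℝ × (Fin d → ℝ) => u p.1 p.2) ∧
  ∃ A : ℝ, ∀ s ∈ Set.Icc (0:ℝ) 1, ∀ t ∈ Set.Icc (0:ℝ) 1, ∀ x y : Fin d → ℝ,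
    ‖u t x - u t y‖ ≤ A * ‖x - y‖ ^ α ∧ ‖u t x - u s x‖ ≤ A * |t - s| ^ α

/-- `u(t,·)` is divergence-free on `T^d` in the sense of distributions:
`∫_{T^d} u(t,x)·∇φ(x) dx = 0` for every smooth periodic `φ`. -/
def WeakDivFree {d : ℕ} (u : ℝ → (Fin d → ℝ) → Fin d → ℝ) : Prop :=
  ∀ t ∈ Set.Icc (0:ℝ) 1, ∀ φ : (Fin d → ℝ) → ℝ, ContDiff ℝ (⊤ : ℕ∞) φ →
    SpacePeriodic φ → (∫ x in box d, ∑ i, u t x i * pd φ i x) = 0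

/-- `g` is the (square-integrable) weak gradient of `f` on `T^d`:
`∫ f div ψ = −∫ g·ψ` for all smooth periodic vector fields `ψ`. -/
def HasWeakGradient {d : ℕ} (f : (Fin d → ℝ) → ℝ)
    (g : (Fin d → ℝ) → Fin d → ℝ) : Prop :=
  ∀ ψ : (Fin d → ℝ) → Fin d → ℝ,
    (∀ i, ContDiff ℝ (⊤ : ℕ∞) fun x => ψ x i) →
    (∀ i, SpacePeriodic fun x => ψ x i) →
    (∫ x in box d, f x * ∑ i, pd (fun y => ψ y i) i x)
      = - ∫ x in box d, ∑ i, g x i * ψ x i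

/-!
Write `f_ε` for the mollification of `f` at scale `ε`. For smooth `θ` the energy balance reads
`d/dt ‖θ‖² / 2 = -κ‖∇θ‖²`, while the large-scale energy `‖θ_ε‖² / 2` changes only through
`κ⟨θ_ε, (Δθ)_ε⟩` and the flux `⟨θ_ε, (u · ∇θ)_ε⟩`. As `u` is divergence free, the flux is an average
of products `(θ(x - εz) - θ_ε(x)) (u(x - εz) - u(x)) · ∇θ_ε(x)`, hence of size
`ε^ᾱ ε^α ε^(ᾱ - 1)`, and the diffusive term is at most `κ ε^(2ᾱ - 2)`. Since
`0 ≤ ‖θ‖² - ‖θ_ε‖² ≤ 4 H² ε^(2ᾱ)`, subtracting the two balances bounds `κ ∫ ‖∇θ‖²` by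
`ε^(2ᾱ) + κ ε^(2ᾱ - 2) + A ε^(α + 2ᾱ - 1)` up to `H²`, and `ε^(α + 1) = κ / (1 + A)` balances the
last two terms.

The time derivative of `θ` is not assumed to be bounded near a given time, so the energies are
differentiated from the right only: by the maximum principle `|θ(s, ·) - θ(t, ·)| ≤ M (s - t)` for
`s ≥ t`, which dominates the difference quotients.
-/

open scoped ContDiff

section CompactCarrier

variable {X Y : Type*} [TopologicalSpace X] [MeasurableSpace X]
  [TopologicalSpace Y] [MeasurableSpace Y]

/-- The measure `μ` is carried by a compact set. Continuous functions are then integrable as soon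
as `μ` is finite. -/
class HasCompactCarrier (μ : Measure X) : Prop where
  exists_isCompact : ∃ K, IsCompact K ∧ μ Kᶜ = 0

instance HasCompactCarrier.prod (μ : Measure X) (ν : Measure Y) [SFinite μ] [SFinite ν]
    [HasCompactCarrier μ] [HasCompactCarrier ν] : HasCompactCarrier (μ.prod ν) := by
  obtain ⟨K, hK, hμ⟩ := HasCompactCarrier.exists_isCompact (μ := μ)
  obtain ⟨L, hL, hν⟩ := HasCompactCarrier.exists_isCompact (μ := ν)
  refine ⟨K ×ˢ L, hK.prod hL, ?_⟩
  rw [Set.compl_prod_eq_union]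
  exact measure_union_null (by simp [hμ]) (by simp [hν])

lemma HasCompactCarrier.restrict [T2Space X] [OpensMeasurableSpace X] {μ : Measure X} {K : Set X}
    (hK : IsCompact K) : HasCompactCarrier (μ.restrict K) :=
  ⟨K, hK, by simp [Measure.restrict_apply hK.measurableSet.compl]⟩

lemma integrable_of_continuous [T2Space X] [OpensMeasurableSpace X] {μ : Measure X}
    [IsFiniteMeasure μ] [HasCompactCarrier μ] {f : X → ℝ} (hf : Continuous f) :
    Integrable f μ := by
  obtain ⟨K, hK, hμ⟩ := HasCompactCarrier.exists_isCompact (μ := μ)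
  rw [← Measure.restrict_eq_self_of_ae_mem (s := K) (μ := μ) hμ]
  exact hf.continuousOn.integrableOn_compact hK

lemma integral_swap_of_continuous [T2Space X] [T2Space Y] [OpensMeasurableSpace X]
    [OpensMeasurableSpace Y] [SecondCountableTopologyEither X Y] {μ : Measure X} {ν : Measure Y}
    [IsFiniteMeasure μ] [IsFiniteMeasure ν] [HasCompactCarrier μ] [HasCompactCarrier ν]
    {F : X → Y → ℝ} (hF : Continuous (Function.uncurry F)) :
    ∫ x, ∫ y, F x y ∂ν ∂μ = ∫ y, ∫ x, F x y ∂μ ∂ν :=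
  integral_integral_swap (integrable_of_continuous hF)

lemma integrable_integral_of_continuous [T2Space X] [T2Space Y] [OpensMeasurableSpace X]
    [OpensMeasurableSpace Y] [SecondCountableTopologyEither X Y] {μ : Measure X} {ν : Measure Y}
    [IsFiniteMeasure μ] [IsFiniteMeasure ν] [HasCompactCarrier μ] [HasCompactCarrier ν]
    {F : X → Y → ℝ} (hF : Continuous (Function.uncurry F)) :
    Integrable (fun x => ∫ y, F x y ∂ν) μ :=
  (integrable_of_continuous hF).integral_prod_left

end CompactCarrier

section BoundedIntegrands

variable {X Y : Type*} [MeasurableSpace X]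

lemma abs_integral_le_of_forall_abs_le {μ : Measure X} [IsProbabilityMeasure μ] {f : X → ℝ} {B : ℝ}
    (hf : ∀ᵐ x ∂μ, |f x| ≤ B) : |∫ x, f x ∂μ| ≤ B := by
  simpa using norm_integral_le_of_norm_le_const (f := f) hf

lemma continuousOn_integral_of_abs_le [TopologicalSpace X] [OpensMeasurableSpace X]
    [SecondCountableTopology X] [TopologicalSpace Y] [FirstCountableTopology Y]
    {μ : Measure X} [IsFiniteMeasure μ] {S : Set Y} {F : Y → X → ℝ} {B : ℝ}
    (hF : ContinuousOn (Function.uncurry F) (S ×ˢ Set.univ))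
    (hB : ∀ y ∈ S, ∀ x, |F y x| ≤ B) : ContinuousOn (fun y => ∫ x, F y x ∂μ) S :=
  continuousOn_of_dominated
    (fun y hy => (hF.comp_continuous (Continuous.prodMk_right y)
      fun x => ⟨hy, Set.mem_univ x⟩).aestronglyMeasurable)
    (fun y hy => ae_of_all _ (hB y hy)) (integrable_const B)
    (ae_of_all _ fun x => hF.comp (Continuous.prodMk_left x).continuousOn
      fun _ hy => ⟨hy, Set.mem_univ x⟩)

end BoundedIntegrands

section PeriodicFunctions

variable {d : ℕ}

instance isProbabilityMeasure_restrict_box : IsProbabilityMeasure (volume.restrict (box d)) :=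
  ⟨by simp [box, Real.volume_Icc_pi]⟩

instance hasCompactCarrier_restrict_box : HasCompactCarrier (volume.restrict (box d)) :=
  .restrict isCompact_Icc

lemma exists_add_intCast_mem_box (x : Fin d → ℝ) :
    ∃ k : Fin d → ℤ, (x + fun i => (k i : ℝ)) ∈ box d := by
  refine ⟨fun i => -⌊x i⌋, fun i => ?_, fun i => ?_⟩ <;>
    simp only [Pi.zero_apply, Pi.one_apply, Pi.add_apply, Int.cast_neg]
  · linarith [Int.floor_le (x i)]
  · linarith [Int.lt_floor_add_one (x i)]

lemma exists_forall_le_of_spacePeriodic {K : Set ℝ} (hK : IsCompact K) (hne : K.Nonempty)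
    {F : ℝ → (Fin d → ℝ) → ℝ} (hper : ∀ t, SpacePeriodic (F t))
    (hF : ContinuousOn (Function.uncurry F) (K ×ˢ Set.univ)) :
    ∃ t₀ ∈ K, ∃ x₀, ∀ t ∈ K, ∀ x, F t x ≤ F t₀ x₀ := by
  have hbox : (0 : Fin d → ℝ) ∈ box d := ⟨le_rfl, zero_le_one⟩
  obtain ⟨t₁, ht₁⟩ := hne
  obtain ⟨⟨t₀, x₀⟩, hp, hmax⟩ := (hK.prod (isCompact_Icc : IsCompact (box d))).exists_isMaxOn
    ⟨(t₁, 0), ht₁, hbox⟩ (hF.mono (Set.prod_mono_right (Set.subset_univ _)))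
  refine ⟨t₀, hp.1, x₀, fun t ht x => ?_⟩
  obtain ⟨k, hk⟩ := exists_add_intCast_mem_box x
  rw [← hper t x k]
  exact hmax (a := (t, _)) ⟨ht, hk⟩

lemma exists_forall_abs_le_of_spacePeriodic {K : Set ℝ} (hK : IsCompact K)
    {F : ℝ → (Fin d → ℝ) → ℝ} (hper : ∀ t, SpacePeriodic (F t))
    (hF : ContinuousOn (Function.uncurry F) (K ×ˢ Set.univ)) :
    ∃ B, ∀ t ∈ K, ∀ x, |F t x| ≤ B := by
  rcases K.eq_empty_or_nonempty with rfl | hne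
  · exact ⟨0, by simp⟩
  · obtain ⟨t₀, -, x₀, h⟩ := exists_forall_le_of_spacePeriodic (F := fun t x => |F t x|) hK hne
      (fun t x k => by simp only [hper t x k]) hF.abs
    exact ⟨_, h⟩

lemma SpacePeriodic.exists_abs_le {f : (Fin d → ℝ) → ℝ} (hper : SpacePeriodic f)
    (hf : Continuous f) : ∃ B, ∀ x, |f x| ≤ B := by
  obtain ⟨B, hB⟩ := exists_forall_abs_le_of_spacePeriodic (F := fun _ => f) isCompact_singleton
    (fun _ => hper) (by fun_prop : Continuous fun p : ℝ × (Fin d → ℝ) => f p.2).continuousOn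
  exact ⟨B, hB 0 rfl⟩

variable {f g : (Fin d → ℝ) → ℝ}

lemma SpacePeriodic.mul (hf : SpacePeriodic f) (hg : SpacePeriodic g) :
    SpacePeriodic fun x => f x * g x :=
  fun x k => by simp only [hf x k, hg x k]

lemma SpacePeriodic.comp_sub (hf : SpacePeriodic f) (a : Fin d → ℝ) :
    SpacePeriodic fun x => f (x - a) :=
  fun x k => by simp only [add_sub_right_comm, hf (x - a) k]

lemma SpacePeriodic.exists_torus_lift (hf : SpacePeriodic f) :
    ∃ F : UnitAddTorus (Fin d) → ℝ, ∀ x : Fin d → ℝ, F (fun i => (x i : UnitAddCircle)) = f x := by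
  have hfac : Function.FactorsThrough f
      fun (x : Fin d → ℝ) (i : Fin d) => (x i : UnitAddCircle) := fun x y hxy => by
    have hdiff : ∀ i, ∃ k : ℤ, k • (1 : ℝ) = x i - y i := fun i => by
      rw [← AddCircle.coe_eq_zero_iff, AddCircle.coe_sub, sub_eq_zero]
      exact congrFun hxy i
    choose k hk using hdiff
    rw [← hf y k]
    congr 1
    ext i
    have := hk i
    simp only [zsmul_eq_mul, mul_one] at this
    simp [this]
  exact ⟨_, hfac.extend_apply 0⟩

lemma halfOpenBox_ae_eq_box :
    {x : Fin d → ℝ | ∀ i, x i ∈ Set.Ioc ((0 : Fin d → ℝ) i) ((0 : Fin d → ℝ) i + 1)}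
      =ᵐ[volume] box d := by
  have hpi : {x : Fin d → ℝ | ∀ i, x i ∈ Set.Ioc ((0 : Fin d → ℝ) i) ((0 : Fin d → ℝ) i + 1)}
      = Set.pi Set.univ fun i => Set.Ioc ((0 : Fin d → ℝ) i) ((1 : Fin d → ℝ) i) := by
    ext x
    simp
  rw [hpi]
  exact Measure.univ_pi_Ioc_ae_eq_Icc (μ := fun _ : Fin d => (volume : Measure ℝ))

-- Both sides are the integral over the torus, taken over two different fundamental boxes.
lemma SpacePeriodic.setIntegral_comp_add (hf : SpacePeriodic f) (a : Fin d → ℝ) :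
    ∫ x in box d, f (x + a) = ∫ x in box d, f x := by
  obtain ⟨F, hF⟩ := hf.exists_torus_lift
  have hint (b : Fin d → ℝ) := UnitAddTorus.integral_preimage F b
  simp only [hF] at hint
  rw [← setIntegral_congr_set halfOpenBox_ae_eq_box, ← setIntegral_congr_set halfOpenBox_ae_eq_box,
    ← hint 0, hint a, ← (measurePreserving_add_right volume a).setIntegral_preimage_emb
      (measurableEmbedding_addRight a) f]
  congr 2
  ext x
  simp only [Pi.zero_apply, Set.mem_Ioc, Set.mem_ofPred_eq, Set.preimage_ofPred_eq, Pi.add_apply]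
  refine forall_congr' fun i => ?_
  constructor <;> rintro ⟨h, h'⟩ <;> constructor <;> linarith

lemma SpacePeriodic.setIntegral_comp_sub (hf : SpacePeriodic f) (a : Fin d → ℝ) :
    ∫ x in box d, f (x - a) = ∫ x in box d, f x := by
  simpa only [sub_eq_add_neg] using hf.setIntegral_comp_add (-a)

end PeriodicFunctions

section PartialDerivatives

variable {d : ℕ} {f g : (Fin d → ℝ) → ℝ} {i : Fin d} {x : Fin d → ℝ}

lemma hasDerivAt_comp_add_smul_single {s : ℝ}
    (hf : DifferentiableAt ℝ f (x + s • Pi.single i 1)) :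
    HasDerivAt (fun s : ℝ => f (x + s • Pi.single i 1)) (pd f i (x + s • Pi.single i 1)) s :=
  hf.hasFDerivAt.comp_hasDerivAt s <| by
    simpa using ((hasDerivAt_id s).smul_const (Pi.single i (1 : ℝ) : Fin d → ℝ)).const_add x

lemma contDiff_pd {n m : WithTop ℕ∞} (hf : ContDiff ℝ n f) (h : m + 1 ≤ n) (i : Fin d) :
    ContDiff ℝ m (pd f i) :=
  (hf.fderiv_right h).clm_apply contDiff_const

lemma continuous_pd (hf : ContDiff ℝ 1 f) (i : Fin d) : Continuous (pd f i) :=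
  (contDiff_pd (m := 0) hf (by simp) i).continuous

lemma spacePeriodic_pd (hf : SpacePeriodic f) (i : Fin d) : SpacePeriodic (pd f i) := fun x k => by
  unfold pd
  rw [← fderiv_comp_add_right, funext fun y => hf y k]

lemma pd_neg : pd (fun x => -f x) i x = -pd f i x := by
  simp [pd, fderiv_fun_neg]

lemma pd_mul (hf : Differentiable ℝ f) (hg : Differentiable ℝ g) :
    pd (fun x => f x * g x) i x = f x * pd g i x + g x * pd f i x := by
  simp [pd, fderiv_fun_mul (hf x) (hg x)]

lemma pd_sub (hf : Differentiable ℝ f) (hg : Differentiable ℝ g) :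
    pd (fun x => f x - g x) i x = pd f i x - pd g i x := by
  simp [pd, fderiv_fun_sub (hf x) (hg x)]

lemma pd_comp_sub (a : Fin d → ℝ) : pd (fun x => f (x - a)) i x = pd f i (x - a) := by
  simp only [pd, fderiv_comp_sub]

lemma pd_comp_sub_smul (hf : Differentiable ℝ f) (ε : ℝ) (z : Fin d → ℝ) :
    pd (fun z => f (x - ε • z)) i z = -(ε * pd f i (x - ε • z)) := by
  have hline : HasFDerivAt (fun z : Fin d → ℝ => x - ε • z)
      (-(ε • ContinuousLinearMap.id ℝ (Fin d → ℝ))) z :=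
    ((hasFDerivAt_id (𝕜 := ℝ) z).const_smul ε).const_sub x
  have hcomp := ((hf (x - ε • z)).hasFDerivAt.comp z hline).fderiv
  simp only [Function.comp_def] at hcomp
  simp [pd, hcomp]

lemma SpacePeriodic.setIntegral_pd_eq_zero (hper : SpacePeriodic f) (hf : ContDiff ℝ 1 f)
    (i : Fin d) : ∫ x in box d, pd f i x = 0 := by
  have hpd : Continuous (pd f i) := continuous_pd hf i
  have hline (x : Fin d → ℝ) :
      ∫ s in (0 : ℝ)..1, pd f i (x + s • Pi.single i 1) = 0 := by
    rw [intervalIntegral.integral_eq_sub_of_hasDerivAt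
      (fun s _ => hasDerivAt_comp_add_smul_single (hf.differentiable one_ne_zero _))
      (Continuous.intervalIntegrable (by fun_prop) _ _)]
    have hcast : (fun j => ((Pi.single i 1 : Fin d → ℤ) j : ℝ)) = Pi.single i 1 := by
      ext j
      by_cases h : j = i <;> simp [h]
    simpa [hcast, sub_eq_zero] using hper x (Pi.single i 1)
  have : HasCompactCarrier (volume.restrict (Set.Icc (0 : ℝ) 1)) := .restrict isCompact_Icc
  calc ∫ x in box d, pd f i x
      = ∫ s in (0 : ℝ)..1, ∫ x in box d, pd f i (x + s • Pi.single i 1) := by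
        simp [(spacePeriodic_pd hper i).setIntegral_comp_add]
    _ = ∫ x in box d, ∫ s in (0 : ℝ)..1, pd f i (x + s • Pi.single i 1) := by
        simp_rw [intervalIntegral.integral_of_le zero_le_one, ← integral_Icc_eq_integral_Ioc]
        exact integral_swap_of_continuous (by fun_prop)
    _ = 0 := by simp [hline]

lemma SpacePeriodic.setIntegral_mul_pd (hfp : SpacePeriodic f) (hgp : SpacePeriodic g)
    (hf : ContDiff ℝ 1 f) (hg : ContDiff ℝ 1 g) (i : Fin d) :
    ∫ x in box d, f x * pd g i x = -∫ x in box d, g x * pd f i x := by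
  have hzero := (hfp.mul hgp).setIntegral_pd_eq_zero (hf.mul hg) i
  simp_rw [pd_mul (hf.differentiable one_ne_zero) (hg.differentiable one_ne_zero)] at hzero
  rw [integral_add
    (integrable_of_continuous (f := fun x => f x * pd g i x)
      (hf.continuous.mul (continuous_pd hg i)))
    (integrable_of_continuous (f := fun x => g x * pd f i x)
      (hg.continuous.mul (continuous_pd hf i)))] at hzero
  linarith

end PartialDerivatives

section Mollification

variable {d : ℕ} {f : (Fin d → ℝ) → ℝ} {ε : ℝ}

/-- A smooth probability density on `ℝ^d` supported in the closed unit ball of the sup norm, the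
fixed profile of the spatial mollification. -/
def mollifier (d : ℕ) : (Fin d → ℝ) → ℝ :=
  (⟨1 / 2, 1, by norm_num, by norm_num⟩ : ContDiffBump (0 : Fin d → ℝ)).normed volume

lemma contDiff_mollifier : ContDiff ℝ ∞ (mollifier d) := ContDiffBump.contDiff_normed _

lemma mollifier_nonneg (z : Fin d → ℝ) : 0 ≤ mollifier d z := ContDiffBump.nonneg_normed _ z

lemma hasCompactSupport_mollifier : HasCompactSupport (mollifier d) :=
  ContDiffBump.hasCompactSupport_normed _

lemma tsupport_mollifier : tsupport (mollifier d) = Metric.closedBall 0 1 :=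
  ContDiffBump.tsupport_normed_eq _

lemma integral_mollifier : ∫ z, mollifier d z = 1 := ContDiffBump.integral_normed _

/-- The law of the displacement `z` in the average `f_ε(x) = ∫ f(x - εz) φ(z) dz`. Using a measure
instead of a weight makes `f_ε` an expectation. -/
def mollifierMeasure (d : ℕ) : Measure (Fin d → ℝ) :=
  volume.withDensity fun z => ENNReal.ofReal (mollifier d z)

lemma integral_mollifierMeasure (F : (Fin d → ℝ) → ℝ) :
    ∫ z, F z ∂mollifierMeasure d = ∫ z, mollifier d z * F z := by
  rw [mollifierMeasure, integral_withDensity_eq_integral_toReal_smul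
    contDiff_mollifier.continuous.measurable.ennreal_ofReal (by simp)]
  simp [ENNReal.toReal_ofReal (mollifier_nonneg _)]

lemma mollifierMeasure_compl_closedBall : mollifierMeasure d (Metric.closedBall 0 1)ᶜ = 0 := by
  rw [mollifierMeasure, withDensity_apply _ Metric.isClosed_closedBall.measurableSet.compl]
  refine (setLIntegral_congr_fun Metric.isClosed_closedBall.measurableSet.compl
    fun z hz => ?_).trans lintegral_zero
  rw [← tsupport_mollifier] at hz
  simp [image_eq_zero_of_notMem_tsupport hz]

lemma ae_norm_le_one_mollifierMeasure : ∀ᵐ z ∂mollifierMeasure d, ‖z‖ ≤ 1 := by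
  simpa [ae_iff, Metric.closedBall, Set.compl_def] using mollifierMeasure_compl_closedBall (d := d)

instance isProbabilityMeasure_mollifierMeasure : IsProbabilityMeasure (mollifierMeasure d) := by
  refine ⟨?_⟩
  rw [mollifierMeasure, withDensity_apply _ .univ, setLIntegral_univ,
    ← ofReal_integral_eq_lintegral_ofReal
      (contDiff_mollifier.continuous.integrable_of_hasCompactSupport hasCompactSupport_mollifier)
      (ae_of_all _ mollifier_nonneg), integral_mollifier, ENNReal.ofReal_one]

instance hasCompactCarrier_mollifierMeasure : HasCompactCarrier (mollifierMeasure d) :=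
  ⟨_, isCompact_closedBall 0 1, mollifierMeasure_compl_closedBall⟩

/-- The spatial mollification `f_ε` of `f` at scale `ε`. -/
def mollify (ε : ℝ) (f : (Fin d → ℝ) → ℝ) (x : Fin d → ℝ) : ℝ :=
  ∫ z, f (x - ε • z) ∂mollifierMeasure d

@[simp]
lemma mollify_zero : mollify 0 f = f := by
  ext x
  simp [mollify]

lemma spacePeriodic_mollify (hf : SpacePeriodic f) (ε : ℝ) : SpacePeriodic (mollify ε f) :=
  fun x k => by simp only [mollify, add_sub_right_comm, hf _ k]

lemma abs_mollify_le {B : ℝ} (hB : ∀ x, |f x| ≤ B) (x : Fin d → ℝ) : |mollify ε f x| ≤ B :=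
  abs_integral_le_of_forall_abs_le (ae_of_all _ fun _ => hB _)

lemma continuousOn_mollify {S : Set ℝ} {F : ℝ → (Fin d → ℝ) → ℝ} {B : ℝ}
    (hF : ContinuousOn (Function.uncurry F) (S ×ˢ Set.univ)) (hB : ∀ t ∈ S, ∀ x, |F t x| ≤ B) :
    ContinuousOn (Function.uncurry fun t => mollify ε (F t)) (S ×ˢ Set.univ) :=
  continuousOn_integral_of_abs_le
    (F := fun (p : ℝ × (Fin d → ℝ)) z => F p.1 (p.2 - ε • z))
    (hF.comp (f := fun q : (ℝ × (Fin d → ℝ)) × (Fin d → ℝ) => (q.1.1, q.1.2 - ε • q.2))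
      (by fun_prop) fun _ hq => ⟨hq.1.1, Set.mem_univ _⟩)
    fun p hp _ => hB p.1 hp.1 _

lemma continuous_mollify_uncurry (hper : SpacePeriodic f) (hf : Continuous f) :
    Continuous fun p : ℝ × (Fin d → ℝ) => mollify p.1 f p.2 := by
  obtain ⟨B, hB⟩ := hper.exists_abs_le hf
  exact continuousOn_univ.1 <| continuousOn_integral_of_abs_le
    (F := fun (p : ℝ × (Fin d → ℝ)) z => f (p.2 - p.1 • z))
    (by fun_prop : Continuous _).continuousOn fun _ _ _ => hB _

lemma continuous_mollify (hper : SpacePeriodic f) (hf : Continuous f) (ε : ℝ) :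
    Continuous (mollify ε f) :=
  (continuous_mollify_uncurry hper hf).comp (Continuous.prodMk_right ε)

-- Rescaling `z` exhibits `f_ε` as a convolution with the smooth kernel `φ(ε⁻¹ ·)`.
lemma contDiff_mollify (hf : Continuous f) (hε : ε ≠ 0) : ContDiff ℝ ∞ (mollify ε f) := by
  have hsupp : HasCompactSupport fun w => mollifier d (ε⁻¹ • w) :=
    hasCompactSupport_mollifier.comp_homeomorph (Homeomorph.smulOfNeZero ε⁻¹ (inv_ne_zero hε))
  have hconv := hsupp.contDiff_convolution_left (ContinuousLinearMap.mul ℝ ℝ) (μ := volume) (g := f)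
    (contDiff_mollifier.comp (contDiff_const_smul ε⁻¹) : ContDiff ℝ ∞ _) hf.locallyIntegrable
  have hscale (x : Fin d → ℝ) :
      convolution (fun w => mollifier d (ε⁻¹ • w)) f (ContinuousLinearMap.mul ℝ ℝ) volume x
        = |(ε⁻¹ ^ Module.finrank ℝ (Fin d → ℝ))⁻¹| * mollify ε f x := by
    rw [mollify, integral_mollifierMeasure, ← smul_eq_mul, ← Measure.integral_comp_smul volume
      (fun z => mollifier d z * f (x - ε • z)) ε⁻¹]
    simp [convolution, smul_smul, hε]
  have heq : mollify ε f = fun x => |(ε⁻¹ ^ Module.finrank ℝ (Fin d → ℝ))⁻¹|⁻¹ *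
      convolution (fun w => mollifier d (ε⁻¹ • w)) f (ContinuousLinearMap.mul ℝ ℝ) volume x := by
    ext x
    rw [hscale, inv_mul_cancel_left₀ (by positivity)]
  rw [heq]
  exact contDiff_const.mul hconv

lemma pd_mollify (hper : SpacePeriodic f) (hf : ContDiff ℝ 1 f) (hε : ε ≠ 0) (i : Fin d) :
    pd (mollify ε f) i = mollify ε (pd f i) := by
  ext x
  obtain ⟨B, hB⟩ := (spacePeriodic_pd hper i).exists_abs_le (continuous_pd hf i)
  have hpd : Continuous (pd f i) := continuous_pd hf i
  have hleft : HasDerivAt (fun s : ℝ => mollify ε f (x + s • Pi.single i 1))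
      (pd (mollify ε f) i x) 0 := by
    simpa using hasDerivAt_comp_add_smul_single (s := 0) (x := x) (i := i)
      ((contDiff_mollify hf.continuous hε).differentiable (by simp) _)
  have hright := (hasDerivAt_integral_of_dominated_loc_of_deriv_le (μ := mollifierMeasure d)
    (F := fun (s : ℝ) z => f (x - ε • z + s • Pi.single i 1))
    (F' := fun (s : ℝ) z => pd f i (x - ε • z + s • Pi.single i 1)) (x₀ := 0) univ_mem
    (.of_forall fun s => (by fun_prop : Continuous _).aestronglyMeasurable)
    (integrable_of_continuous (by fun_prop)) (by fun_prop : Continuous _).aestronglyMeasurable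
    (ae_of_all _ fun z s _ => hB _) (integrable_const B)
    (ae_of_all _ fun z s _ => hasDerivAt_comp_add_smul_single
      (hf.differentiable one_ne_zero _))).2
  simp only [mollify, add_sub_right_comm] at hleft
  simpa [mollify] using hleft.unique hright

lemma integral_mollifier_mul_pd {F : (Fin d → ℝ) → ℝ} (hF : ContDiff ℝ 1 F) (i : Fin d) :
    ∫ z, mollifier d z * pd F i z = -∫ z, pd (mollifier d) i z * F z := by
  have hφ : ContDiff ℝ 1 (mollifier d) := contDiff_mollifier.of_le (by simp)
  have hφc := hφ.continuous
  have hFc := hF.continuous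
  have hFpd := continuous_pd hF i
  have hφpd := continuous_pd hφ i
  have hsupp : HasCompactSupport (mollifier d) := hasCompactSupport_mollifier
  have hsupp' : HasCompactSupport (pd (mollifier d) i) := hsupp.fderiv_apply (𝕜 := ℝ) _
  exact integral_mul_fderiv_eq_neg_fderiv_mul_of_integrable
    ((hφpd.mul hFc).integrable_of_hasCompactSupport hsupp'.mul_right)
    ((hφc.mul hFpd).integrable_of_hasCompactSupport hsupp.mul_right)
    ((hφc.mul hFc).integrable_of_hasCompactSupport hsupp.mul_right)
    (fun x _ => hφ.differentiable one_ne_zero x) (fun x _ => hF.differentiable one_ne_zero x)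

/-- The total `L¹` norm of the first derivatives of the mollifier. It is the constant in the bound
of `∇f_ε` by the oscillation of `f` at scale `ε`. -/
def mollifierGradMass (d : ℕ) : ℝ := ∑ i, ∫ z, |pd (mollifier d) i z|

lemma mollifierGradMass_nonneg : 0 ≤ mollifierGradMass d :=
  Finset.sum_nonneg fun _ _ => integral_nonneg fun _ => abs_nonneg _

lemma abs_sub_le_of_norm_le_one {F : Type*} [SeminormedAddCommGroup F] {f : (Fin d → ℝ) → F} {δ : ℝ}
    (hε : 0 ≤ ε) (hδ : ∀ x y, ‖x - y‖ ≤ ε → ‖f x - f y‖ ≤ δ) (x : Fin d → ℝ) {z : Fin d → ℝ}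
    (hz : ‖z‖ ≤ 1) : ‖f (x - ε • z) - f x‖ ≤ δ := by
  refine hδ _ _ ?_
  rw [sub_sub_cancel_left, norm_neg, norm_smul, Real.norm_of_nonneg hε]
  exact mul_le_of_le_one_right hε hz

-- Integrate by parts onto the mollifier and subtract the constant `f x` from `f (x - ε z)`.
lemma abs_pd_mollify_le (hper : SpacePeriodic f) (hf : ContDiff ℝ 1 f) (hε : 0 < ε) {δ : ℝ}
    (hδ : ∀ x y, ‖x - y‖ ≤ ε → ‖f x - f y‖ ≤ δ) (i : Fin d) (x : Fin d → ℝ) :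
    |pd (mollify ε f) i x| ≤ δ / ε * ∫ z, |pd (mollifier d) i z| := by
  have hdiff := hf.differentiable one_ne_zero
  have hosc : ContDiff ℝ 1 fun z => f (x - ε • z) - f x := by fun_prop
  have hpd (z : Fin d → ℝ) :
      pd (fun z => f (x - ε • z) - f x) i z = -(ε * pd f i (x - ε • z)) := by
    rw [pd_sub (by fun_prop) (by fun_prop), pd_comp_sub_smul hdiff]
    simp [pd]
  have hparts := integral_mollifier_mul_pd hosc i
  simp only [hpd, mul_neg, integral_neg, neg_inj, mul_left_comm _ ε, integral_const_mul] at hparts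
  rw [← integral_mollifierMeasure] at hparts
  have hφpd := continuous_pd (contDiff_mollifier.of_le (by simp) : ContDiff ℝ 1 (mollifier d)) i
  have hsupp : HasCompactSupport (pd (mollifier d) i) :=
    hasCompactSupport_mollifier.fderiv_apply (𝕜 := ℝ) _
  have hbound : |∫ z, pd (mollifier d) i z * (f (x - ε • z) - f x)|
      ≤ δ * ∫ z, |pd (mollifier d) i z| := by
    rw [← integral_const_mul, ← Real.norm_eq_abs]
    refine norm_integral_le_of_norm_le
      ((hφpd.integrable_of_hasCompactSupport hsupp).abs.const_mul δ) (ae_of_all _ fun z => ?_)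
    by_cases hz : z ∈ tsupport (mollifier d)
    · rw [tsupport_mollifier, mem_closedBall_zero_iff] at hz
      rw [norm_mul, mul_comm, Real.norm_eq_abs (pd _ _ _)]
      gcongr
      exact abs_sub_le_of_norm_le_one hε.le hδ x hz
    · have : pd (mollifier d) i z = 0 := by
        simp [pd, image_eq_zero_of_notMem_tsupport (mt (tsupport_fderiv_subset ℝ ·) hz)]
      simp [this]
  rw [pd_mollify hper hf hε.ne', div_mul_eq_mul_div, le_div_iff₀ hε, mul_comm, ← abs_of_pos hε,
    ← abs_mul, abs_of_pos hε, mollify, hparts]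
  exact hbound

lemma sum_abs_pd_mollify_le (hper : SpacePeriodic f) (hf : ContDiff ℝ 1 f) (hε : 0 < ε) {δ : ℝ}
    (hδ : ∀ x y, ‖x - y‖ ≤ ε → ‖f x - f y‖ ≤ δ) (x : Fin d → ℝ) :
    ∑ i, |pd (mollify ε f) i x| ≤ mollifierGradMass d * (δ / ε) := by
  rw [mollifierGradMass, mul_comm, Finset.mul_sum]
  exact Finset.sum_le_sum fun i _ => abs_pd_mollify_le hper hf hε hδ i x

end Mollification

section DivergenceFreeFields

variable {d : ℕ} {U V : (Fin d → ℝ) → Fin d → ℝ} {f g : (Fin d → ℝ) → ℝ} {x : Fin d → ℝ}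

/-- The advection term `U · ∇f`. -/
def advect (U : (Fin d → ℝ) → Fin d → ℝ) (f : (Fin d → ℝ) → ℝ) (x : Fin d → ℝ) : ℝ :=
  ∑ i, U x i * pd f i x

/-- `U` is a continuous vector field on the torus which is divergence-free in the sense of
distributions. -/
structure IsDivFreeField (U : (Fin d → ℝ) → Fin d → ℝ) : Prop where
  continuous : Continuous U
  periodic : ∀ i, SpacePeriodic fun x => U x i
  setIntegral_advect_smooth : ∀ φ : (Fin d → ℝ) → ℝ, ContDiff ℝ ∞ φ → SpacePeriodic φ →
    ∫ x in box d, advect U φ x = 0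

lemma WeakDivFree.isDivFreeField {u : ℝ → (Fin d → ℝ) → Fin d → ℝ} (hdiv : WeakDivFree u)
    (hu : Continuous (Function.uncurry u)) (hper : ∀ t i, SpacePeriodic fun x => u t x i) {t : ℝ}
    (ht : t ∈ Set.Icc (0 : ℝ) 1) : IsDivFreeField (u t) :=
  ⟨hu.comp (Continuous.prodMk_right t), hper t, hdiv t ht⟩

lemma continuous_advect (hU : Continuous U) (hf : ContDiff ℝ 1 f) : Continuous (advect U f) := by
  have hpd := continuous_pd hf
  unfold advect
  fun_prop

lemma spacePeriodic_advect (hU : ∀ i, SpacePeriodic fun x => U x i) (hf : SpacePeriodic f) :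
    SpacePeriodic (advect U f) := fun x k => by
  simp only [advect, hU _ x k, spacePeriodic_pd hf _ x k]

lemma advect_sub_left : advect (fun x => U x - V x) f x = advect U f x - advect V f x := by
  simp [advect, sub_mul]

lemma advect_mul (hf : Differentiable ℝ f) (hg : Differentiable ℝ g) :
    advect U (fun x => f x * g x) x = f x * advect U g x + g x * advect U f x := by
  simp only [advect, pd_mul hf hg, Finset.mul_sum, ← Finset.sum_add_distrib]
  exact Finset.sum_congr rfl fun i _ => by ring

lemma advect_comp_sub (a : Fin d → ℝ) :
    advect (fun x => U (x - a)) (fun x => f (x - a)) x = advect U f (x - a) := by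
  simp only [advect, pd_comp_sub]

lemma abs_advect_le : |advect U f x| ≤ ‖U x‖ * ∑ i, |pd f i x| := by
  rw [Finset.mul_sum]
  refine (Finset.abs_sum_le_sum_abs _ _).trans (Finset.sum_le_sum fun i _ => ?_)
  rw [abs_mul]
  gcongr
  exact norm_le_pi_norm (U x) i

namespace IsDivFreeField

lemma comp_sub (hU : IsDivFreeField U) (a : Fin d → ℝ) : IsDivFreeField fun x => U (x - a) where
  continuous := hU.continuous.comp (continuous_id.sub continuous_const)
  periodic i := (hU.periodic i).comp_sub a
  setIntegral_advect_smooth φ hφ hφp := by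
    have hφ' : ContDiff ℝ ∞ fun x => φ (x + a) := by fun_prop
    have hφp' : SpacePeriodic fun x => φ (x + a) := by simpa using hφp.comp_sub (-a)
    calc ∫ x in box d, advect (fun x => U (x - a)) φ x
        = ∫ x in box d, advect U (fun y => φ (y + a)) (x - a) := by
          simp only [← advect_comp_sub, sub_add_cancel]
      _ = ∫ x in box d, advect U (fun y => φ (y + a)) x :=
          (spacePeriodic_advect hU.periodic hφp').setIntegral_comp_sub a
      _ = 0 := hU.setIntegral_advect_smooth _ hφ' hφp'

-- Test with `f_ε` and let `ε → 0`.
lemma setIntegral_advect (hU : IsDivFreeField U) (hfp : SpacePeriodic f) (hf : ContDiff ℝ 1 f) :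
    ∫ x in box d, advect U f x = 0 := by
  have hUc := hU.continuous
  have hmoll := fun i => continuous_mollify_uncurry (spacePeriodic_pd hfp i) (continuous_pd hf i)
  have hcont : Continuous fun ε : ℝ => ∫ x in box d, ∑ i, U x i * mollify ε (pd f i) x :=
    continuous_parametric_integral_of_continuous
      (f := fun ε x => ∑ i, U x i * mollify ε (pd f i) x)
      (continuous_finsetSum _ fun i _ =>
        (by fun_prop : Continuous fun p : ℝ × (Fin d → ℝ) => U p.2 i).mul (hmoll i)) isCompact_Icc
  have hzero : Set.EqOn (fun ε : ℝ => ∫ x in box d, ∑ i, U x i * mollify ε (pd f i) x) 0 {0}ᶜ := by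
    intro ε hε
    simp only [← pd_mollify hfp hf hε]
    exact hU.setIntegral_advect_smooth _ (contDiff_mollify hf.continuous hε)
      (spacePeriodic_mollify hfp ε)
  simpa [advect] using congrFun
    (hcont.ext_on (dense_compl_singleton (0 : ℝ)) continuous_zero hzero) 0

lemma setIntegral_mul_advect (hU : IsDivFreeField U) (hfp : SpacePeriodic f) (hgp : SpacePeriodic g)
    (hf : ContDiff ℝ 1 f) (hg : ContDiff ℝ 1 g) :
    ∫ x in box d, f x * advect U g x = -∫ x in box d, g x * advect U f x := by
  have hzero := hU.setIntegral_advect (hfp.mul hgp) (hf.mul hg)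
  simp_rw [advect_mul (hf.differentiable one_ne_zero) (hg.differentiable one_ne_zero)] at hzero
  rw [integral_add
    (integrable_of_continuous (f := fun x => f x * advect U g x)
      (hf.continuous.mul (continuous_advect hU.continuous hg)))
    (integrable_of_continuous (f := fun x => g x * advect U f x)
      (hg.continuous.mul (continuous_advect hU.continuous hf)))] at hzero
  linarith

lemma setIntegral_mul_advect_self (hU : IsDivFreeField U) (hfp : SpacePeriodic f)
    (hf : ContDiff ℝ 1 f) : ∫ x in box d, f x * advect U f x = 0 := by
  linarith [hU.setIntegral_mul_advect hfp hfp hf hf]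

end IsDivFreeField

end DivergenceFreeFields

section CommutatorEstimate

variable {d : ℕ} {f g : (Fin d → ℝ) → ℝ} {U : (Fin d → ℝ) → Fin d → ℝ} {κ ε δ η : ℝ}

/-- The Laplacian `Δf`. -/
def lap (f : (Fin d → ℝ) → ℝ) (x : Fin d → ℝ) : ℝ := ∑ i, pd (pd f i) i x

/-- The right-hand side `κΔf - U · ∇f` of the advection–diffusion equation. -/
def advDiffOp (κ : ℝ) (U : (Fin d → ℝ) → Fin d → ℝ) (f : (Fin d → ℝ) → ℝ) (x : Fin d → ℝ) : ℝ :=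
  κ * lap f x - advect U f x

lemma contDiff_pd_one (hf : ContDiff ℝ 2 f) (i : Fin d) : ContDiff ℝ 1 (pd f i) :=
  contDiff_pd hf (by norm_num) i

lemma continuous_lap (hf : ContDiff ℝ 2 f) : Continuous (lap f) :=
  continuous_finsetSum _ fun i _ => continuous_pd (contDiff_pd_one hf i) i

lemma spacePeriodic_lap (hf : SpacePeriodic f) : SpacePeriodic (lap f) := fun x k => by
  simp only [lap, spacePeriodic_pd (spacePeriodic_pd hf _) _ x k]

lemma gradSq_nonneg (x : Fin d → ℝ) : 0 ≤ gradSq f x := Finset.sum_nonneg fun _ _ => sq_nonneg _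

lemma SpacePeriodic.setIntegral_mul_lap (hfp : SpacePeriodic f) (hf : ContDiff ℝ 2 f) :
    ∫ x in box d, f x * lap f x = -∫ x in box d, gradSq f x := by
  have hpd := fun i => continuous_pd (hf.of_le one_le_two) i
  have hpdpd := fun i => continuous_pd (contDiff_pd_one hf i) i
  have hfc := hf.continuous
  simp only [lap, gradSq, Finset.mul_sum]
  rw [integral_finsetSum _ fun i _ => integrable_of_continuous (by fun_prop),
    integral_finsetSum _ fun i _ => integrable_of_continuous (by fun_prop),
    ← Finset.sum_neg_distrib]
  refine Finset.sum_congr rfl fun i _ => ?_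
  simp only [sq]
  exact hfp.setIntegral_mul_pd (spacePeriodic_pd hfp i) (hf.of_le one_le_two)
    (contDiff_pd_one hf i) i

lemma lap_mollify (hfp : SpacePeriodic f) (hf : ContDiff ℝ 2 f) (hε : ε ≠ 0) :
    lap (mollify ε f) = mollify ε (lap f) := by
  ext x
  have hpdpd := fun i => continuous_pd (contDiff_pd_one hf i) i
  simp only [lap, mollify]
  rw [integral_finsetSum _ fun i _ => integrable_of_continuous (by fun_prop)]
  refine Finset.sum_congr rfl fun i _ => ?_
  rw [← mollify, ← pd_mollify (spacePeriodic_pd hfp i) (contDiff_pd_one hf i) hε,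
    ← pd_mollify hfp (hf.of_le one_le_two) hε]

lemma setIntegral_mollify_mul (hf : Continuous f) (hg : Continuous g) :
    ∫ x in box d, mollify ε f x * g x
      = ∫ z, (∫ x in box d, f (x - ε • z) * g x) ∂mollifierMeasure d := by
  simp only [mollify, ← integral_mul_const]
  exact integral_swap_of_continuous (F := fun x z => f (x - ε • z) * g x) (by fun_prop)

lemma abs_sub_mollify_le (hf : Continuous f) (hε : 0 ≤ ε)
    (hδ : ∀ x y, ‖x - y‖ ≤ ε → ‖f x - f y‖ ≤ δ) (x : Fin d → ℝ) : |f x - mollify ε f x| ≤ δ := by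
  have hsub : f x - mollify ε f x = ∫ z, (f x - f (x - ε • z)) ∂mollifierMeasure d := by
    rw [integral_sub (integrable_const _) (integrable_of_continuous (by fun_prop))]
    simp [mollify]
  rw [hsub]
  refine abs_integral_le_of_forall_abs_le (ae_norm_le_one_mollifierMeasure.mono fun z hz => ?_)
  rw [abs_sub_comm]
  exact abs_sub_le_of_norm_le_one hε hδ x hz

lemma abs_comp_sub_sub_mollify_le (hf : Continuous f) (hε : 0 ≤ ε)
    (hδ : ∀ x y, ‖x - y‖ ≤ ε → ‖f x - f y‖ ≤ δ) (x : Fin d → ℝ) {z : Fin d → ℝ} (hz : ‖z‖ ≤ 1) :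
    |f (x - ε • z) - mollify ε f x| ≤ 2 * δ := by
  have hshift : |f (x - ε • z) - f x| ≤ δ := abs_sub_le_of_norm_le_one hε hδ x hz
  linarith [abs_sub_le (f (x - ε • z)) (f x) (mollify ε f x), abs_sub_mollify_le hf hε hδ x]

lemma l2sq_sub_l2sq_mollify (hfp : SpacePeriodic f) (hf : Continuous f) :
    l2sq f - l2sq (mollify ε f)
      = ∫ z, (∫ x in box d, (f (x - ε • z) - mollify ε f x) ^ 2) ∂mollifierMeasure d := by
  have hF := continuous_mollify hfp hf ε
  have hexpand (z : Fin d → ℝ) : ∫ x in box d, (f (x - ε • z) - mollify ε f x) ^ 2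
      = l2sq f - 2 * (∫ x in box d, f (x - ε • z) * mollify ε f x) + l2sq (mollify ε f) := by
    have hshift : ∫ x in box d, f (x - ε • z) ^ 2 = l2sq f :=
      SpacePeriodic.setIntegral_comp_sub (f := fun x => f x ^ 2)
        (fun x k => by simp only [hfp x k]) (ε • z)
    simp only [sub_sq, mul_assoc]
    rw [integral_add (integrable_of_continuous (by fun_prop))
      (integrable_of_continuous (by fun_prop)), integral_sub
      (integrable_of_continuous (by fun_prop)) (integrable_of_continuous (by fun_prop)),
      integral_const_mul, hshift, l2sq, l2sq]
  have hcross : ∫ z, (∫ x in box d, f (x - ε • z) * mollify ε f x) ∂mollifierMeasure d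
      = l2sq (mollify ε f) := by
    rw [← setIntegral_mollify_mul hf hF, l2sq]
    simp only [sq]
  have hint : Integrable (fun z => ∫ x in box d, f (x - ε • z) * mollify ε f x)
      (mollifierMeasure d) :=
    integrable_integral_of_continuous (F := fun z x => f (x - ε • z) * mollify ε f x) (by fun_prop)
  simp only [hexpand]
  rw [integral_add (by fun_prop) (by fun_prop), integral_sub (by fun_prop) (by fun_prop),
    integral_const_mul, hcross]
  simp only [integral_const, probReal_univ, one_smul]
  ring

lemma l2sq_mollify_le (hfp : SpacePeriodic f) (hf : Continuous f) :
    l2sq (mollify ε f) ≤ l2sq f := by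
  rw [← sub_nonneg, l2sq_sub_l2sq_mollify hfp hf]
  exact integral_nonneg fun z => integral_nonneg fun x => sq_nonneg _

lemma l2sq_sub_l2sq_mollify_le (hfp : SpacePeriodic f) (hf : Continuous f) (hε : 0 ≤ ε)
    (hδ : ∀ x y, ‖x - y‖ ≤ ε → ‖f x - f y‖ ≤ δ) :
    l2sq f - l2sq (mollify ε f) ≤ (2 * δ) ^ 2 := by
  rw [l2sq_sub_l2sq_mollify hfp hf]
  refine (le_abs_self _).trans (abs_integral_le_of_forall_abs_le
    (ae_norm_le_one_mollifierMeasure.mono fun z hz =>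
      abs_integral_le_of_forall_abs_le (ae_of_all _ fun x => ?_)))
  rw [abs_of_nonneg (sq_nonneg _), ← sq_abs]
  gcongr
  exact abs_comp_sub_sub_mollify_le hf hε hδ x hz

-- Of the four products in the increment form, only `f (x - a) U (x - a) · ∇g` and
-- `f (x - a) U · ∇g` survive integration, because `U` and its translate are divergence-free.
lemma IsDivFreeField.setIntegral_advect_comp_sub_mul (hU : IsDivFreeField U)
    (hfp : SpacePeriodic f) (hgp : SpacePeriodic g) (hf : ContDiff ℝ 1 f) (hg : ContDiff ℝ 1 g)
    (a : Fin d → ℝ) :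
    ∫ x in box d, advect U f (x - a) * g x
      = -(∫ x in box d, (f (x - a) - g x) * advect (fun y => U (y - a) - U y) g x)
        - ∫ x in box d, f (x - a) * advect U g x := by
  have hUa := hU.comp_sub a
  have hfa : ContDiff ℝ 1 fun x => f (x - a) := by fun_prop
  have hfc := hf.continuous
  have hgc := hg.continuous
  have hadv := continuous_advect hU.continuous hg
  have hadva := continuous_advect hUa.continuous hg
  have hskew := hUa.setIntegral_mul_advect hgp (hfp.comp_sub a) hg hfa
  have hzero := hU.setIntegral_mul_advect_self hgp hg
  have hzeroa := hUa.setIntegral_mul_advect_self hgp hg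
  simp only [advect_comp_sub] at hskew
  simp only [advect_sub_left, sub_mul, mul_sub, mul_comm (advect U f _)]
  rw [hskew, integral_sub (integrable_of_continuous (by fun_prop))
    (integrable_of_continuous (by fun_prop)), integral_sub
    (integrable_of_continuous (by fun_prop)) (integrable_of_continuous (by fun_prop)),
    integral_sub (integrable_of_continuous (by fun_prop))
    (integrable_of_continuous (by fun_prop)), hzero, hzeroa]
  ring

-- The Constantin–E–Titi commutator identity: averaging over translates, the term which is linear in
-- the increments vanishes.
lemma IsDivFreeField.setIntegral_mollify_mul_mollify_advect (hU : IsDivFreeField U)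
    (hfp : SpacePeriodic f) (hf : ContDiff ℝ 1 f) (hε : ε ≠ 0) :
    ∫ x in box d, mollify ε f x * mollify ε (advect U f) x
      = -∫ z, (∫ x in box d, (f (x - ε • z) - mollify ε f x) *
          advect (fun y => U (y - ε • z) - U y) (mollify ε f) x) ∂mollifierMeasure d := by
  set F := mollify ε f
  have hF : ContDiff ℝ 1 F := (contDiff_mollify hf.continuous hε).of_le (by simp)
  have hFp : SpacePeriodic F := spacePeriodic_mollify hfp ε
  have hadvF := continuous_advect hU.continuous hF
  have hFc := hF.continuous
  have hfc := hf.continuous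
  have hincr : Integrable (fun z => ∫ x in box d,
      (f (x - ε • z) - F x) * advect (fun y => U (y - ε • z) - U y) F x) (mollifierMeasure d) := by
    refine integrable_integral_of_continuous (F := fun z x =>
      (f (x - ε • z) - F x) * advect (fun y => U (y - ε • z) - U y) F x) ?_
    have hUc := hU.continuous
    have hpd := continuous_pd hF
    unfold advect
    fun_prop
  calc ∫ x in box d, F x * mollify ε (advect U f) x
      = ∫ z, (∫ x in box d, advect U f (x - ε • z) * F x) ∂mollifierMeasure d := by
        simp only [mul_comm (F _), setIntegral_mollify_mul (continuous_advect hU.continuous hf) hFc]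
    _ = -(∫ z, (∫ x in box d, (f (x - ε • z) - F x) *
          advect (fun y => U (y - ε • z) - U y) F x) ∂mollifierMeasure d)
        - ∫ x in box d, F x * advect U F x := by
        simp only [hU.setIntegral_advect_comp_sub_mul hfp hFp hf hF]
        rw [integral_sub hincr.fun_neg (integrable_integral_of_continuous
          (F := fun z x => f (x - ε • z) * advect U F x) (by fun_prop)), integral_neg,
          ← setIntegral_mollify_mul hfc hadvF]
    _ = _ := by rw [hU.setIntegral_mul_advect_self hFp hF, sub_zero]

lemma IsDivFreeField.abs_setIntegral_mollify_mul_mollify_advect_le (hU : IsDivFreeField U)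
    (hfp : SpacePeriodic f) (hf : ContDiff ℝ 1 f) (hε : 0 < ε)
    (hδ : ∀ x y, ‖x - y‖ ≤ ε → ‖f x - f y‖ ≤ δ) (hη : ∀ x y, ‖x - y‖ ≤ ε → ‖U x - U y‖ ≤ η) :
    |∫ x in box d, mollify ε f x * mollify ε (advect U f) x|
      ≤ 2 * δ * (η * (mollifierGradMass d * (δ / ε))) := by
  have hδ₀ : 0 ≤ δ := (norm_nonneg _).trans (hδ 0 0 (by simpa using hε.le))
  have hη₀ : 0 ≤ η := (norm_nonneg _).trans (hη 0 0 (by simpa using hε.le))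
  rw [hU.setIntegral_mollify_mul_mollify_advect hfp hf hε.ne', abs_neg]
  refine abs_integral_le_of_forall_abs_le (ae_norm_le_one_mollifierMeasure.mono fun z hz =>
    abs_integral_le_of_forall_abs_le (ae_of_all _ fun x => ?_))
  rw [abs_mul]
  gcongr
  · exact abs_comp_sub_sub_mollify_le hf.continuous hε.le hδ x hz
  · refine abs_advect_le.trans ?_
    gcongr
    · exact abs_sub_le_of_norm_le_one hε.le hη x hz
    · exact sum_abs_pd_mollify_le hfp hf hε hδ x

lemma gradSq_mollify_le (hfp : SpacePeriodic f) (hf : ContDiff ℝ 1 f) (hε : 0 < ε)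
    (hδ : ∀ x y, ‖x - y‖ ≤ ε → ‖f x - f y‖ ≤ δ) (x : Fin d → ℝ) :
    gradSq (mollify ε f) x ≤ (mollifierGradMass d * (δ / ε)) ^ 2 := calc
  gradSq (mollify ε f) x = ∑ i, |pd (mollify ε f) i x| ^ 2 := by simp only [gradSq, sq_abs]
  _ ≤ (∑ i, |pd (mollify ε f) i x|) ^ 2 :=
    Finset.sum_sq_le_sq_sum_of_nonneg fun _ _ => abs_nonneg _
  _ ≤ (mollifierGradMass d * (δ / ε)) ^ 2 := by
    gcongr
    exact sum_abs_pd_mollify_le hfp hf hε hδ x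

lemma spacePeriodic_advDiffOp (hU : ∀ i, SpacePeriodic fun x => U x i) (hf : SpacePeriodic f) :
    SpacePeriodic (advDiffOp κ U f) := fun x k => by
  simp only [advDiffOp, spacePeriodic_lap hf x k, spacePeriodic_advect hU hf x k]

lemma IsDivFreeField.setIntegral_mul_advDiffOp (hU : IsDivFreeField U) (hfp : SpacePeriodic f)
    (hf : ContDiff ℝ 2 f) :
    ∫ x in box d, f x * advDiffOp κ U f x = -(κ * ∫ x in box d, gradSq f x) := by
  have hlap := continuous_lap hf
  have hadv := continuous_advect hU.continuous (hf.of_le one_le_two)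
  have hfc := hf.continuous
  simp only [advDiffOp, mul_sub, mul_left_comm _ κ]
  rw [integral_sub (integrable_of_continuous (by fun_prop))
    (integrable_of_continuous (by fun_prop)), integral_const_mul, hfp.setIntegral_mul_lap hf,
    hU.setIntegral_mul_advect_self hfp (hf.of_le one_le_two)]
  ring

lemma mollify_advDiffOp (hU : Continuous U) (hf : ContDiff ℝ 2 f) (x : Fin d → ℝ) :
    mollify ε (advDiffOp κ U f) x = κ * mollify ε (lap f) x - mollify ε (advect U f) x := by
  have hlap := continuous_lap hf
  have hadv := continuous_advect hU (hf.of_le one_le_two)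
  unfold mollify advDiffOp
  rw [integral_sub (integrable_of_continuous (by fun_prop))
    (integrable_of_continuous (by fun_prop)), integral_const_mul]

lemma IsDivFreeField.neg_setIntegral_mollify_mul_mollify_advDiffOp_le (hU : IsDivFreeField U)
    (hfp : SpacePeriodic f) (hf : ContDiff ℝ 2 f) (hκ : 0 ≤ κ) (hε : 0 < ε)
    (hδ : ∀ x y, ‖x - y‖ ≤ ε → ‖f x - f y‖ ≤ δ) (hη : ∀ x y, ‖x - y‖ ≤ ε → ‖U x - U y‖ ≤ η) :
    -∫ x in box d, mollify ε f x * mollify ε (advDiffOp κ U f) x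
      ≤ κ * (mollifierGradMass d * (δ / ε)) ^ 2
        + 2 * δ * (η * (mollifierGradMass d * (δ / ε))) := by
  have hf₁ : ContDiff ℝ 1 f := hf.of_le one_le_two
  have hF : ContDiff ℝ 2 (mollify ε f) :=
    contDiff_infty.1 (contDiff_mollify hf.continuous hε.ne') 2
  have hFc := hF.continuous
  have hlap := continuous_lap hF
  have hadv := continuous_mollify (spacePeriodic_advect hU.periodic hfp)
    (continuous_advect hU.continuous hf₁) ε
  have hdiff : ∫ x in box d, gradSq (mollify ε f) x ≤ (mollifierGradMass d * (δ / ε)) ^ 2 :=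
    (le_abs_self _).trans <| abs_integral_le_of_forall_abs_le <| ae_of_all _ fun x => by
      rw [abs_of_nonneg (gradSq_nonneg x)]
      exact gradSq_mollify_le hfp hf₁ hε hδ x
  have hflux := (le_abs_self _).trans
    (hU.abs_setIntegral_mollify_mul_mollify_advect_le hfp hf₁ hε hδ hη)
  simp only [mollify_advDiffOp hU.continuous hf, ← lap_mollify hfp hf hε.ne', mul_sub,
    mul_left_comm _ κ]
  rw [integral_sub (integrable_of_continuous (by fun_prop))
    (integrable_of_continuous (by fun_prop)), integral_const_mul,
    (spacePeriodic_mollify hfp ε).setIntegral_mul_lap hF]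
  linarith [mul_le_mul_of_nonneg_left hdiff hκ]

end CommutatorEstimate

section MaximumPrinciple

variable {d : ℕ} {f g : (Fin d → ℝ) → ℝ} {U : (Fin d → ℝ) → Fin d → ℝ} {κ : ℝ} {x : Fin d → ℝ}

lemma deriv_deriv_nonpos_of_isLocalMax {f : ℝ → ℝ} {x : ℝ} (h : IsLocalMax f x)
    (hf : ContinuousAt f x) : deriv (deriv f) x ≤ 0 := by
  by_contra! hpos
  have hmin := isLocalMin_of_deriv_deriv_pos hpos h.deriv_eq_zero hf
  have hconst : f =ᶠ[𝓝 x] fun _ => f x := by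
    filter_upwards [h, hmin] with y hle hge using le_antisymm hle hge
  have hzero : deriv (deriv f) x = 0 := by simp [hconst.deriv.deriv_eq]
  exact hpos.ne' hzero

lemma nonneg_of_hasDerivAt_of_isMaxOn_Icc {f : ℝ → ℝ} {f' a b : ℝ} (hab : a < b)
    (hf : HasDerivAt f f' b) (hmax : IsMaxOn f (Set.Icc a b) b) : 0 ≤ f' := by
  have hcone : a - b ∈ posTangentConeAt (Set.Icc a b) b :=
    sub_mem_posTangentConeAt_of_segment_subset (by rw [segment_symm, segment_eq_Icc hab.le])
  have hle := hmax.localize.hasFDerivWithinAt_nonpos hf.hasFDerivAt.hasFDerivWithinAt hcone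
  simp only [ContinuousLinearMap.toSpanSingleton_apply, smul_eq_mul] at hle
  nlinarith

lemma pd_eq_zero_of_isLocalMax (h : IsLocalMax f x) (i : Fin d) : pd f i x = 0 := by
  simp [pd, h.fderiv_eq_zero]

lemma pd_pd_nonpos_of_isLocalMax (hf : ContDiff ℝ 2 f) (h : IsLocalMax f x) (i : Fin d) :
    pd (pd f i) i x ≤ 0 := by
  have hline : deriv (fun s : ℝ => f (x + s • Pi.single i 1))
      = fun s => pd f i (x + s • Pi.single i 1) := funext fun s =>
    (hasDerivAt_comp_add_smul_single (hf.differentiable two_ne_zero _)).deriv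
  have hline' : deriv (deriv fun s : ℝ => f (x + s • Pi.single i 1)) 0 = pd (pd f i) i x := by
    rw [hline, (hasDerivAt_comp_add_smul_single
      ((contDiff_pd_one hf i).differentiable one_ne_zero _)).deriv, zero_smul, add_zero]
  have hcont : Continuous fun s : ℝ => x + s • (Pi.single i 1 : Fin d → ℝ) := by fun_prop
  have hmax : IsLocalMax (fun s : ℝ => f (x + s • Pi.single i 1)) 0 :=
    IsLocalMax.comp_continuous (f := f) (by simpa using h) hcont.continuousAt
  rw [← hline']
  exact deriv_deriv_nonpos_of_isLocalMax hmax (hf.continuous.comp hcont).continuousAt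

lemma advDiffOp_le_of_isLocalMax_sub (hκ : 0 ≤ κ) (hf : ContDiff ℝ 2 f) (hg : ContDiff ℝ 2 g)
    (h : IsLocalMax (fun y => f y - g y) x) : advDiffOp κ U f x ≤ advDiffOp κ U g x := by
  have hpd (i : Fin d) : pd (fun y => f y - g y) i = fun y => pd f i y - pd g i y := funext fun _ =>
    pd_sub (hf.differentiable two_ne_zero) (hg.differentiable two_ne_zero)
  have hgrad (i : Fin d) : pd f i x = pd g i x := by
    simpa [hpd, sub_eq_zero] using pd_eq_zero_of_isLocalMax h i
  have hhess (i : Fin d) : pd (pd f i) i x ≤ pd (pd g i) i x := by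
    have hle := pd_pd_nonpos_of_isLocalMax (hf.sub hg) h i
    rwa [hpd, pd_sub ((contDiff_pd_one hf i).differentiable one_ne_zero)
      ((contDiff_pd_one hg i).differentiable one_ne_zero), sub_nonpos] at hle
  unfold advDiffOp lap advect
  simp only [hgrad]
  gcongr with i
  exact hhess i

namespace IsAdvDiffSol

variable {u : ℝ → (Fin d → ℝ) → Fin d → ℝ} {θin : (Fin d → ℝ) → ℝ} {θ : ℝ → (Fin d → ℝ) → ℝ}
  {t M : ℝ}

lemma neg (h : IsAdvDiffSol u κ θin θ) :
    IsAdvDiffSol u κ (fun x => -θin x) fun t x => -θ t x where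
  periodic t x k := by simp only [h.periodic t x k]
  cont := h.cont.neg
  init x := by simp only [h.init]
  timeDiff t ht x := (h.timeDiff t ht x).neg
  spaceC2 t ht := (h.spaceC2 t ht).neg
  eqn t ht x := by
    have hpd (f : (Fin d → ℝ) → ℝ) (i : Fin d) : pd (fun y => -f y) i = fun y => -pd f i y :=
      funext fun _ => pd_neg
    have heq := h.eqn t ht x
    simp only [hpd, deriv.fun_neg, mul_neg, Finset.sum_neg_distrib]
    linarith

lemma hasDerivAt (h : IsAdvDiffSol u κ θin θ) (ht : t ∈ Set.Ioc (0 : ℝ) 1) (x : Fin d → ℝ) :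
    HasDerivAt (fun s => θ s x) (advDiffOp κ (u t) (θ t) x) t := by
  have heq : advDiffOp κ (u t) (θ t) x = deriv (fun s => θ s x) t :=
    sub_eq_of_eq_add (h.eqn t ht x).symm
  rw [heq]
  exact (h.timeDiff t ht x).hasDerivAt

-- Comparison with the barrier `θ(t, x) + M (s - t)`.
lemma sub_le_of_advDiffOp_lt (h : IsAdvDiffSol u κ θin θ) (hκ : 0 ≤ κ) (ht : t ∈ Set.Ioc (0 : ℝ) 1)
    (hM : ∀ s ∈ Set.Icc t 1, ∀ x, advDiffOp κ (u s) (θ t) x < M) :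
    ∀ s ∈ Set.Icc t 1, ∀ x, θ s x - θ t x ≤ M * (s - t) := by
  have hsub : Set.Icc t 1 ⊆ Set.Icc 0 1 := Set.Icc_subset_Icc_left ht.1.le
  have hθt : Continuous (θ t) := (h.spaceC2 t ht).continuous
  have hcont : ContinuousOn (Function.uncurry fun s x => θ s x - θ t x - M * (s - t))
      (Set.Icc t 1 ×ˢ Set.univ) :=
    ((h.cont.mono (Set.prod_mono_left hsub)).sub
      (by fun_prop : Continuous fun p : ℝ × (Fin d → ℝ) => θ t p.2).continuousOn).sub
      (by fun_prop : Continuous fun p : ℝ × (Fin d → ℝ) => M * (p.1 - t)).continuousOn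
  obtain ⟨s₀, hs₀, x₀, hmax⟩ := exists_forall_le_of_spacePeriodic isCompact_Icc
    (Set.nonempty_Icc.2 ht.2) (fun s x k => by simp only [h.periodic _ x k]) hcont
  rcases hs₀.1.eq_or_lt with rfl | hlt
  · intro s hs x
    have := hmax s hs x
    simp only [sub_self, mul_zero] at this
    linarith
  · have hs₀' : s₀ ∈ Set.Ioc (0 : ℝ) 1 := ⟨ht.1.trans hlt, hs₀.2⟩
    have htime : 0 ≤ advDiffOp κ (u s₀) (θ s₀) x₀ - M * 1 :=
      nonneg_of_hasDerivAt_of_isMaxOn_Icc hlt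
        (((h.hasDerivAt hs₀' x₀).sub_const (θ t x₀)).sub
          (((hasDerivAt_id s₀).sub_const t).const_mul M))
        fun s hs => hmax s ⟨hs.1, hs.2.trans hs₀.2⟩ x₀
    have hspace : advDiffOp κ (u s₀) (θ s₀) x₀ ≤ advDiffOp κ (u s₀) (θ t) x₀ :=
      advDiffOp_le_of_isLocalMax_sub hκ (h.spaceC2 s₀ hs₀') (h.spaceC2 t ht)
        (.of_forall fun x => by linarith [hmax s₀ hs₀ x])
    linarith [hM s₀ hs₀ x₀]

lemma exists_abs_sub_le (h : IsAdvDiffSol u κ θin θ) (hκ : 0 ≤ κ)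
    (hu : Continuous (Function.uncurry u)) (hup : ∀ t i, SpacePeriodic fun x => u t x i)
    (ht : t ∈ Set.Ioc (0 : ℝ) 1) :
    ∃ M, ∀ s ∈ Set.Icc t 1, ∀ x, |θ s x - θ t x| ≤ M * (s - t) := by
  have hbound {w : (Fin d → ℝ) → ℝ} (hwp : SpacePeriodic w) (hw : ContDiff ℝ 2 w) :
      ∃ B, ∀ s ∈ Set.Icc t 1, ∀ x, |advDiffOp κ (u s) w x| ≤ B := by
    refine exists_forall_abs_le_of_spacePeriodic isCompact_Icc
      (fun s => spacePeriodic_advDiffOp (hup s) hwp) (Continuous.continuousOn ?_)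
    have hlap := continuous_lap hw
    have hpd := continuous_pd (hw.of_le one_le_two)
    have hui (i : Fin d) : Continuous fun p : ℝ × (Fin d → ℝ) => u p.1 p.2 i :=
      (continuous_apply i).comp hu
    unfold advDiffOp advect
    fun_prop
  obtain ⟨B, hB⟩ := hbound (h.periodic t) (h.spaceC2 t ht)
  obtain ⟨B', hB'⟩ := hbound (h.neg.periodic t) (h.neg.spaceC2 t ht)
  refine ⟨max B B' + 1, fun s hs x => abs_le'.2 ⟨?_, ?_⟩⟩
  · exact h.sub_le_of_advDiffOp_lt hκ ht (fun s hs x => lt_add_of_le_of_pos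
      ((le_abs_self _).trans ((hB s hs x).trans (le_max_left _ _))) one_pos) s hs x
  · have hneg := h.neg.sub_le_of_advDiffOp_lt (M := max B B' + 1) hκ ht
      (fun s hs x => lt_add_of_le_of_pos
        ((le_abs_self _).trans ((hB' s hs x).trans (le_max_right _ _))) one_pos) s hs x
    linarith

end IsAdvDiffSol

end MaximumPrinciple

section RightDerivatives

variable {X Y : Type*} [TopologicalSpace X] [TopologicalSpace Y]

/-- `v s x` has right derivative `v' x` in time at `t` for every `x`, with increments `O(s - t)`
uniformly in `x`; this is the hypothesis for differentiating under a space integral when equations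
are only known to hold forward in time from `t`. -/
structure HasBddRightDeriv (v : ℝ → X → ℝ) (v' : X → ℝ) (t : ℝ) : Prop where
  eventually_continuous : ∀ᶠ s in 𝓝[≥] t, Continuous (v s)
  hasDerivWithinAt : ∀ x, HasDerivWithinAt (fun s => v s x) (v' x) (Set.Ioi t) t
  exists_abs_sub_le : ∃ M, ∀ᶠ s in 𝓝[≥] t, ∀ x, |v s x - v t x| ≤ M * (s - t)

namespace HasBddRightDeriv

variable {v : ℝ → X → ℝ} {v' : X → ℝ} {t : ℝ}

lemma comp (h : HasBddRightDeriv v v' t) {g : Y → X} (hg : Continuous g) :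
    HasBddRightDeriv (fun s y => v s (g y)) (fun y => v' (g y)) t where
  eventually_continuous := h.eventually_continuous.mono fun _ hs => hs.comp hg
  hasDerivWithinAt y := h.hasDerivWithinAt (g y)
  exists_abs_sub_le := h.exists_abs_sub_le.imp fun _ hM => hM.mono fun _ hs y => hs (g y)

lemma sq (h : HasBddRightDeriv v v' t) {B : ℝ} (hB : ∀ x, |v t x| ≤ B) :
    HasBddRightDeriv (fun s x => v s x ^ 2) (fun x => 2 * (v t x * v' x)) t where
  eventually_continuous := h.eventually_continuous.mono fun _ hs => hs.pow 2
  hasDerivWithinAt x := by simpa [mul_assoc] using (h.hasDerivWithinAt x).fun_pow 2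
  exists_abs_sub_le := by
    obtain ⟨M, hM⟩ := h.exists_abs_sub_le
    refine ⟨M * (2 * B + M), ?_⟩
    filter_upwards [hM, Icc_mem_nhdsGE (lt_add_one t)] with s hs hst x
    rcases hst.1.eq_or_lt with rfl | hlt
    · simp
    have hM0 : 0 ≤ M :=
      nonneg_of_mul_nonneg_left ((abs_nonneg _).trans (hs x)) (sub_pos.2 hlt)
    have hsum : |v s x + v t x| ≤ 2 * B + M := by
      have hle : M * (s - t) ≤ M * 1 := by gcongr; linarith [hst.2]
      have hdiff := abs_le.1 (hs x)
      have hval := abs_le.1 (hB x)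
      exact abs_le.2 ⟨by linarith, by linarith⟩
    calc |v s x ^ 2 - v t x ^ 2| = |v s x - v t x| * |v s x + v t x| := by
          rw [← abs_mul]; ring_nf
      _ ≤ M * (s - t) * (2 * B + M) :=
          mul_le_mul (hs x) hsum (abs_nonneg _) ((abs_nonneg _).trans (hs x))
      _ = M * (2 * B + M) * (s - t) := by ring

lemma hasDerivWithinAt_integral [MeasurableSpace X] [T2Space X] [OpensMeasurableSpace X]
    {μ : Measure X} [IsFiniteMeasure μ] [HasCompactCarrier μ] (h : HasBddRightDeriv v v' t) :
    HasDerivWithinAt (fun s => ∫ x, v s x ∂μ) (∫ x, v' x ∂μ) (Set.Ioi t) t := by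
  obtain ⟨M, hM⟩ := h.exists_abs_sub_le
  have hright : ∀ᶠ s in 𝓝[>] t, t < s := self_mem_nhdsWithin
  have hcont : ∀ᶠ s in 𝓝[>] t, Continuous (v s) :=
    h.eventually_continuous.filter_mono (nhdsWithin_mono t Set.Ioi_subset_Ici_self)
  have hM' := hM.filter_mono (nhdsWithin_mono t Set.Ioi_subset_Ici_self)
  have hct : Continuous (v t) := h.eventually_continuous.self_of_nhdsWithin Set.self_mem_Ici
  have hslope : Tendsto (fun s => ∫ x, slope (fun s => v s x) t s ∂μ) (𝓝[>] t)
      (𝓝 (∫ x, v' x ∂μ)) := by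
    refine tendsto_integral_filter_of_dominated_convergence (fun _ => M) ?_ ?_
      (integrable_const M) (ae_of_all _ fun x =>
        (hasDerivWithinAt_iff_tendsto_slope' Set.self_notMem_Ioi).1 (h.hasDerivWithinAt x))
    · filter_upwards [hcont] with s hs
      simp only [slope_def_field]
      exact (integrable_of_continuous ((hs.sub hct).div_const _)).aestronglyMeasurable
    · filter_upwards [hM', hright] with s hs hts
      refine ae_of_all _ fun x => ?_
      rw [slope_def_field, norm_div, Real.norm_eq_abs, Real.norm_of_nonneg (sub_nonneg.2 hts.le),
        div_le_iff₀ (sub_pos.2 hts)]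
      exact hs x
  refine (hasDerivWithinAt_iff_tendsto_slope' Set.self_notMem_Ioi).2 (hslope.congr' ?_)
  filter_upwards [hcont] with s hs
  simp only [slope_def_field, integral_div]
  rw [integral_sub (integrable_of_continuous hs) (integrable_of_continuous hct)]

lemma mollify {d : ℕ} {v : ℝ → (Fin d → ℝ) → ℝ} {v' : (Fin d → ℝ) → ℝ}
    (h : HasBddRightDeriv v v' t) (hper : ∀ s, SpacePeriodic (v s)) (ε : ℝ) :
    HasBddRightDeriv (fun s => _root_.mollify ε (v s)) (_root_.mollify ε v') t where
  eventually_continuous := h.eventually_continuous.mono fun s hs => continuous_mollify (hper s) hs ε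
  hasDerivWithinAt x :=
    (h.comp (g := fun z => x - ε • z) (by fun_prop)).hasDerivWithinAt_integral
  exists_abs_sub_le := by
    obtain ⟨M, hM⟩ := h.exists_abs_sub_le
    have hct : Continuous (v t) := h.eventually_continuous.self_of_nhdsWithin Set.self_mem_Ici
    refine ⟨M, ?_⟩
    filter_upwards [hM, h.eventually_continuous] with s hs hcs x
    unfold _root_.mollify
    rw [← integral_sub (integrable_of_continuous (by fun_prop))
      (integrable_of_continuous (by fun_prop))]
    exact abs_integral_le_of_forall_abs_le (ae_of_all _ fun z => hs _)

end HasBddRightDeriv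

end RightDerivatives

section EnergyBalance

variable {d : ℕ} {u : ℝ → (Fin d → ℝ) → Fin d → ℝ} {κ ε δ η t : ℝ} {θin : (Fin d → ℝ) → ℝ}
  {θ : ℝ → (Fin d → ℝ) → ℝ}

namespace IsAdvDiffSol

lemma continuous_slice (h : IsAdvDiffSol u κ θin θ) (ht : t ∈ Set.Icc (0 : ℝ) 1) :
    Continuous (θ t) :=
  h.cont.comp_continuous (Continuous.prodMk_right t) fun _ => ⟨ht, Set.mem_univ _⟩

lemma exists_abs_le (h : IsAdvDiffSol u κ θin θ) : ∃ B, ∀ t ∈ Set.Icc (0 : ℝ) 1, ∀ x, |θ t x| ≤ B :=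
  exists_forall_abs_le_of_spacePeriodic isCompact_Icc h.periodic h.cont

lemma hasBddRightDeriv (h : IsAdvDiffSol u κ θin θ) (hκ : 0 ≤ κ)
    (hu : Continuous (Function.uncurry u)) (hup : ∀ t i, SpacePeriodic fun x => u t x i)
    (ht : t ∈ Set.Ioo (0 : ℝ) 1) : HasBddRightDeriv θ (advDiffOp κ (u t) (θ t)) t where
  eventually_continuous := eventually_of_mem (Icc_mem_nhdsGE ht.2) fun _ hs =>
    h.continuous_slice ⟨ht.1.le.trans hs.1, hs.2⟩
  hasDerivWithinAt x := (h.hasDerivAt (Set.Ioo_subset_Ioc_self ht) x).hasDerivWithinAt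
  exists_abs_sub_le :=
    (h.exists_abs_sub_le hκ hu hup (Set.Ioo_subset_Ioc_self ht)).imp fun _ hM =>
      eventually_of_mem (Icc_mem_nhdsGE ht.2) hM

lemma hasDerivWithinAt_l2sq_mollify (h : IsAdvDiffSol u κ θin θ) (hκ : 0 ≤ κ)
    (hu : Continuous (Function.uncurry u)) (hup : ∀ t i, SpacePeriodic fun x => u t x i)
    (ht : t ∈ Set.Ioo (0 : ℝ) 1) (ε : ℝ) :
    HasDerivWithinAt (fun s => l2sq (mollify ε (θ s)))
      (2 * ∫ x in box d, mollify ε (θ t) x * mollify ε (advDiffOp κ (u t) (θ t)) x)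
      (Set.Ioi t) t := by
  obtain ⟨B, hB⟩ := h.exists_abs_le
  rw [← integral_const_mul]
  exact (((h.hasBddRightDeriv hκ hu hup ht).mollify h.periodic ε).sq
    (abs_mollify_le (hB t (Set.Ioo_subset_Icc_self ht)))).hasDerivWithinAt_integral

lemma continuousOn_l2sq_mollify (h : IsAdvDiffSol u κ θin θ) (ε : ℝ) :
    ContinuousOn (fun t => l2sq (mollify ε (θ t))) (Set.Icc 0 1) := by
  obtain ⟨B, hB⟩ := h.exists_abs_le
  refine continuousOn_integral_of_abs_le (B := B ^ 2) ((continuousOn_mollify h.cont hB).pow 2) ?_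
  intro t ht x
  rw [abs_pow]
  exact pow_le_pow_left₀ (abs_nonneg _) (abs_mollify_le (hB t ht) x) 2

lemma hasDerivWithinAt_l2sq (h : IsAdvDiffSol u κ θin θ) (hκ : 0 ≤ κ)
    (hu : Continuous (Function.uncurry u)) (hup : ∀ t i, SpacePeriodic fun x => u t x i)
    (hdiv : WeakDivFree u) (ht : t ∈ Set.Ioo (0 : ℝ) 1) :
    HasDerivWithinAt (fun s => l2sq (θ s)) (-(2 * κ * ∫ x in box d, gradSq (θ t) x))
      (Set.Ioi t) t := by
  have hut := hdiv.isDivFreeField hu hup (Set.Ioo_subset_Icc_self ht)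
  have henergy := h.hasDerivWithinAt_l2sq_mollify hκ hu hup ht 0
  simp only [mollify_zero] at henergy
  rwa [hut.setIntegral_mul_advDiffOp (h.periodic t) (h.spaceC2 t (Set.Ioo_subset_Ioc_self ht)),
    mul_neg, ← mul_assoc] at henergy

lemma integrableOn_setIntegral_gradSq (h : IsAdvDiffSol u κ θin θ) (hκ : 0 < κ)
    (hu : Continuous (Function.uncurry u)) (hup : ∀ t i, SpacePeriodic fun x => u t x i)
    (hdiv : WeakDivFree u) :
    IntegrableOn (fun t => ∫ x in box d, gradSq (θ t) x) (Set.Icc 0 1) := by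
  have hcont := h.continuousOn_l2sq_mollify 0
  simp only [mollify_zero] at hcont
  have hint := intervalIntegral.integrableOn_deriv_right_of_nonneg hcont.neg
    (fun t ht => (h.hasDerivWithinAt_l2sq hκ.le hu hup hdiv ht).neg) fun t _ => by
      rw [neg_neg]
      exact mul_nonneg (by positivity) (integral_nonneg gradSq_nonneg)
  rw [integrableOn_Icc_iff_integrableOn_Ioc]
  simpa [IntegrableOn, integrable_const_mul_iff, hκ.ne'] using hint

-- `(‖θ‖² - ‖θ_ε‖²) / 2` lies between `0` and `2δ²`, and its time derivative is `-κ‖∇θ‖²` up to the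
-- flux through scale `ε`.
lemma mul_dissip_le (h : IsAdvDiffSol u κ θin θ) (hκ : 0 < κ)
    (hu : Continuous (Function.uncurry u)) (hup : ∀ t i, SpacePeriodic fun x => u t x i)
    (hdiv : WeakDivFree u) (hε : 0 < ε)
    (hδ : ∀ t ∈ Set.Icc (0 : ℝ) 1, ∀ x y, ‖x - y‖ ≤ ε → ‖θ t x - θ t y‖ ≤ δ)
    (hη : ∀ t ∈ Set.Icc (0 : ℝ) 1, ∀ x y, ‖x - y‖ ≤ ε → ‖u t x - u t y‖ ≤ η) :
    κ * dissip θ ≤ 2 * δ ^ 2 + (κ * (mollifierGradMass d * (δ / ε)) ^ 2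
      + 2 * δ * (η * (mollifierGradMass d * (δ / ε)))) := by
  set R := κ * (mollifierGradMass d * (δ / ε)) ^ 2
    + 2 * δ * (η * (mollifierGradMass d * (δ / ε)))
  set D := fun t => (l2sq (θ t) - l2sq (mollify ε (θ t))) / 2
  have hcont : ContinuousOn D (Set.Icc 0 1) := by
    have hcont_zero := h.continuousOn_l2sq_mollify 0
    simp only [mollify_zero] at hcont_zero
    exact (hcont_zero.sub (h.continuousOn_l2sq_mollify ε)).div_const 2
  have hderiv (t : ℝ) (ht : t ∈ Set.Ioo (0 : ℝ) 1) :=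
    ((h.hasDerivWithinAt_l2sq hκ.le hu hup hdiv ht).sub
      (h.hasDerivWithinAt_l2sq_mollify hκ.le hu hup ht ε)).div_const 2
  have hgrad := h.integrableOn_setIntegral_gradSq hκ hu hup hdiv
  have hmajor : IntegrableOn (fun t => R - κ * ∫ x in box d, gradSq (θ t) x) (Set.Icc 0 1) :=
    (integrable_const R).sub (hgrad.const_mul κ)
  have hbalance : D 1 - D 0 ≤ ∫ t in (0 : ℝ)..1, (R - κ * ∫ x in box d, gradSq (θ t) x) := by
    refine intervalIntegral.sub_le_integral_of_hasDeriv_right_of_le zero_le_one hcont hderiv hmajor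
      fun t ht => ?_
    have ht' := Set.Ioo_subset_Icc_self ht
    linarith [(hdiv.isDivFreeField hu hup ht').neg_setIntegral_mollify_mul_mollify_advDiffOp_le
      (h.periodic t) (h.spaceC2 t (Set.Ioo_subset_Ioc_self ht)) hκ.le hε (hδ t ht') (hη t ht')]
  have hinit : D 0 ≤ 2 * δ ^ 2 := by
    have hle := l2sq_sub_l2sq_mollify_le (h.periodic 0) (h.continuous_slice (by simp)) hε.le
      (hδ 0 (by simp))
    change (l2sq (θ 0) - l2sq (mollify ε (θ 0))) / 2 ≤ 2 * δ ^ 2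
    linarith
  have hfinal : 0 ≤ D 1 := div_nonneg (sub_nonneg.2
    (l2sq_mollify_le (h.periodic 1) (h.continuous_slice (by simp)))) zero_le_two
  rw [intervalIntegral.integral_of_le zero_le_one, ← integral_Icc_eq_integral_Ioc,
    integral_sub (integrable_const _) (hgrad.const_mul κ), integral_const_mul] at hbalance
  simp only [integral_const, measureReal_restrict_apply_univ, Real.volume_real_Icc, sub_zero,
    zero_le_one, sup_of_le_left, smul_eq_mul, one_mul] at hbalance
  change D 1 - D 0 ≤ R - κ * dissip θ at hbalance
  linarith

end IsAdvDiffSol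

end EnergyBalance

section OptimalScale

variable {a b c κ A H ε : ℝ}

lemma exists_eq_mul_rpow_add_one (ha : 0 ≤ a) (hA : 0 ≤ A) (hκ : κ ∈ Set.Ioc (0 : ℝ) 1) :
    ∃ ε ∈ Set.Ioc (0 : ℝ) 1, κ = (1 + A) * ε ^ (a + 1) := by
  have hκ0 := hκ.1
  have hle : κ / (1 + A) ≤ 1 := div_le_one_of_le₀ (by linarith [hκ.2]) (by positivity)
  refine ⟨(κ / (1 + A)) ^ (1 / (a + 1)), ⟨by positivity, ?_⟩, ?_⟩
  · exact Real.rpow_le_one (by positivity) hle (by positivity)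
  · rw [← Real.rpow_mul (by positivity), one_div_mul_cancel (by positivity), Real.rpow_one,
      mul_div_cancel₀ _ (by positivity)]

lemma rpow_mul_one_add_rpow (ha : 0 ≤ a) (hA : 0 ≤ A) (hε : 0 < ε)
    (hκ : κ = (1 + A) * ε ^ (a + 1)) :
    κ ^ ((a + 2 * b - 1) / (a + 1)) * (1 + A) ^ (2 * (1 - b) / (a + 1))
      = (1 + A) * ε ^ (a + 2 * b - 1) := by
  have hε_exp : (a + 1) * ((a + 2 * b - 1) / (a + 1)) = a + 2 * b - 1 := by field_simp
  have hA_exp : (a + 2 * b - 1) / (a + 1) + 2 * (1 - b) / (a + 1) = 1 := by field_simp; ring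
  rw [hκ, Real.mul_rpow (by positivity) (by positivity), ← Real.rpow_mul hε.le, hε_exp,
    mul_right_comm, ← Real.rpow_add (by positivity), hA_exp, Real.rpow_one]

lemma energy_flux_bound_le (ha : a ≤ 1) (hA : 0 ≤ A) (hc : 0 ≤ c) (hε : ε ∈ Set.Ioc (0 : ℝ) 1)
    (hκ : κ = (1 + A) * ε ^ (a + 1)) :
    2 * (H * ε ^ b) ^ 2 + (κ * (c * (H * ε ^ b / ε)) ^ 2
        + 2 * (H * ε ^ b) * (A * ε ^ a * (c * (H * ε ^ b / ε))))
      ≤ (2 + c ^ 2 + 2 * c) * ((1 + A) * ε ^ (a + 2 * b - 1)) * H ^ 2 := by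
  obtain ⟨hε0, hε1⟩ := hε
  have hsplit : ε ^ (a + 2 * b - 1) = ε ^ a * (ε ^ b) ^ 2 / ε := by
    rw [Real.rpow_sub hε0, Real.rpow_add hε0, Real.rpow_one, mul_comm 2 b, Real.rpow_mul hε0.le,
      Real.rpow_two]
  have hε_le : ε ≤ ε ^ a := by simpa using Real.rpow_le_rpow_of_exponent_ge hε0 hε1 ha
  have hsq_le : (ε ^ b) ^ 2 ≤ ε ^ a * (ε ^ b) ^ 2 / ε := by
    rw [le_div_iff₀ hε0, mul_comm]
    gcongr
  rw [hsplit, hκ, Real.rpow_add_one hε0.ne']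
  set Q := ε ^ a * (ε ^ b) ^ 2 / ε with hQ
  have : 0 ≤ Q := by positivity
  calc _ = H ^ 2 * (2 * (ε ^ b) ^ 2 + c ^ 2 * ((1 + A) * Q) + 2 * c * (A * Q)) := by
        rw [hQ]; field_simp; ring
    _ ≤ H ^ 2 * (2 * ((1 + A) * Q) + c ^ 2 * ((1 + A) * Q) + 2 * c * ((1 + A) * Q)) := by
        gcongr
        · nlinarith
        · linarith
    _ = _ := by ring

lemma tendsto_mul_rpow_mul_mul_nhdsGT_zero {s : ℝ} (hs : 0 < s) (C D E : ℝ) :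
    Tendsto (fun κ : ℝ => C * κ ^ s * D * E) (𝓝[>] 0) (𝓝 0) := by
  have hcont : ContinuousAt (fun κ : ℝ => C * κ ^ s * D * E) 0 := by
    have := Real.continuousAt_rpow_const (0 : ℝ) s (Or.inr hs.le)
    fun_prop
  simpa [Real.zero_rpow hs.ne'] using hcont.tendsto.mono_left nhdsWithin_le_nhds

end OptimalScale

section Rigidity

variable {d : ℕ} {α ᾱ A H κ : ℝ} {u : ℝ → (Fin d → ℝ) → Fin d → ℝ} {θin : (Fin d → ℝ) → ℝ}
  {θ : ℝ → (Fin d → ℝ) → ℝ}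

lemma dissip_nonneg (θ : ℝ → (Fin d → ℝ) → ℝ) : 0 ≤ dissip θ :=
  integral_nonneg fun _ => integral_nonneg gradSq_nonneg

lemma IsAdvDiffSol.mul_dissip_le_of_holder (h : IsAdvDiffSol u κ θin θ)
    (hα : α ∈ Set.Icc (0 : ℝ) 1) (hᾱ : 0 ≤ ᾱ) (hA : 0 ≤ A) (hH : 0 ≤ H)
    (hκ : κ ∈ Set.Ioc (0 : ℝ) 1) (hu : Continuous (Function.uncurry u))
    (hup : ∀ t i, SpacePeriodic fun x => u t x i) (hdiv : WeakDivFree u)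
    (huα : ∀ t ∈ Set.Icc (0 : ℝ) 1, ∀ x y, ‖u t x - u t y‖ ≤ A * ‖x - y‖ ^ α)
    (hθ : ∀ t ∈ Set.Icc (0 : ℝ) 1, ∀ x y, |θ t x - θ t y| ≤ H * ‖x - y‖ ^ ᾱ) :
    κ * dissip θ ≤ (2 + mollifierGradMass d ^ 2 + 2 * mollifierGradMass d)
      * κ ^ ((α + 2 * ᾱ - 1) / (α + 1)) * (1 + A) ^ (2 * (1 - ᾱ) / (α + 1)) * H ^ 2 := by
  obtain ⟨ε, hε, hκε⟩ := exists_eq_mul_rpow_add_one hα.1 hA hκ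
  have hα0 := hα.1
  have hδ (t) (ht : t ∈ Set.Icc (0 : ℝ) 1) (x y) (hxy : ‖x - y‖ ≤ ε) :
      ‖θ t x - θ t y‖ ≤ H * ε ^ ᾱ := (hθ t ht x y).trans (by gcongr)
  have hη (t) (ht : t ∈ Set.Icc (0 : ℝ) 1) (x y) (hxy : ‖x - y‖ ≤ ε) :
      ‖u t x - u t y‖ ≤ A * ε ^ α := (huα t ht x y).trans (by gcongr)
  rw [mul_assoc _ (κ ^ _), rpow_mul_one_add_rpow hα.1 hA hε.1 hκε]
  exact (h.mul_dissip_le hκ.1 hu hup hdiv hε.1 hδ hη).trans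
    (energy_flux_bound_le hα.2 hA mollifierGradMass_nonneg hε hκε)

theorem obukhov_corrsin_rigidity_general (d : ℕ) {α ᾱ : ℝ} (hα : α ∈ Set.Icc (0 : ℝ) 1)
    (hᾱ : 0 ≤ ᾱ) :
    ∃ C : ℝ, 0 < C ∧ ∀ (u : ℝ → (Fin d → ℝ) → Fin d → ℝ) (A : ℝ), 0 ≤ A →
      Continuous (Function.uncurry u) → (∀ t i, SpacePeriodic fun x => u t x i) → WeakDivFree u →
      (∀ t ∈ Set.Icc (0 : ℝ) 1, ∀ x y, ‖u t x - u t y‖ ≤ A * ‖x - y‖ ^ α) →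
      (∀ κ ∈ Set.Ioc (0 : ℝ) 1, ∀ θin θ, ∀ H ≥ 0, IsAdvDiffSol u κ θin θ →
        (∀ t ∈ Set.Icc (0 : ℝ) 1, ∀ x y, |θ t x - θ t y| ≤ H * ‖x - y‖ ^ ᾱ) →
        IntegrableOn (fun t => ∫ x in box d, gradSq (θ t) x) (Set.Icc 0 1) ∧
        κ * dissip θ ≤ C * κ ^ ((α + 2 * ᾱ - 1) / (α + 1))
          * (1 + A) ^ (2 * (1 - ᾱ) / (α + 1)) * H ^ 2) ∧
      (0 < α + 2 * ᾱ - 1 → ∀ (Θin : ℝ → (Fin d → ℝ) → ℝ) (Θ : ℝ → ℝ → (Fin d → ℝ) → ℝ), ∀ H ≥ 0,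
        (∀ κ ∈ Set.Ioc (0 : ℝ) 1, IsAdvDiffSol u κ (Θin κ) (Θ κ) ∧
          ∀ t ∈ Set.Icc (0 : ℝ) 1, ∀ x y, |Θ κ t x - Θ κ t y| ≤ H * ‖x - y‖ ^ ᾱ) →
        Tendsto (fun κ => κ * dissip (Θ κ)) (𝓝[>] 0) (𝓝 0)) := by
  have hc := mollifierGradMass_nonneg (d := d)
  refine ⟨2 + mollifierGradMass d ^ 2 + 2 * mollifierGradMass d, by positivity,
    fun u A hA hu hup hdiv huα => ⟨fun κ hκ θin θ H hH h hθ => ⟨?_, ?_⟩,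
      fun hsuper Θin Θ H hH hΘ => ?_⟩⟩
  · exact h.integrableOn_setIntegral_gradSq hκ.1 hu hup hdiv
  · exact h.mul_dissip_le_of_holder hα hᾱ hA hH hκ hu hup hdiv huα hθ
  · have hsmall : ∀ᶠ κ : ℝ in 𝓝[>] 0, κ ∈ Set.Ioc 0 1 := Ioc_mem_nhdsGT zero_lt_one
    have hexp : 0 < (α + 2 * ᾱ - 1) / (α + 1) := div_pos hsuper (by linarith [hα.1])
    exact tendsto_of_tendsto_of_tendsto_of_le_of_le' tendsto_const_nhds
      (tendsto_mul_rpow_mul_mul_nhdsGT_zero hexp _ ((1 + A) ^ (2 * (1 - ᾱ) / (α + 1))) (H ^ 2))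
      (hsmall.mono fun κ hκ => mul_nonneg hκ.1.le (dissip_nonneg _))
      (hsmall.mono fun κ hκ =>
        (hΘ κ hκ).1.mul_dissip_le_of_holder hα hᾱ hA hH hκ hu hup hdiv huα (hΘ κ hκ).2)

end Rigidity

/-- **Part (i) of the Obukhov–Corrsin dichotomy (quantitative
Constantin–E–Titi-type bound).** For `α, ᾱ ∈ (0,1)` with `α + 2ᾱ − 1 > 0` there
is a constant `C = C(d,α,ᾱ)` such that: for every continuous divergence-free
`u` with `C⁰`- and `C^α`-bounds `A`, every `κ ∈ (0,1]` and every solution `θ^κ`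
of the advection–diffusion equation with uniform `C^{ᾱ}` bound `H`,
`κ ∫_0^1 ‖∇θ^κ‖²_{L²} dt ≤ C κ^{(α+2ᾱ−1)/(α+1)} (1+A)^{2(1−ᾱ)/(α+1)} H²`.
In particular, a family of solutions uniformly bounded in `L^∞_t C^{ᾱ}_x` with
`ᾱ > (1−α)/2` exhibits no anomalous diffusion:
`lim_{κ→0⁺} κ ∫_0^1 ‖∇θ^κ‖²_{L²} dt = 0`. -/
theorem obukhov_corrsin_rigidity
    (d : ℕ) (hd : 2 ≤ d) (α ᾱ : ℝ)
    (hα : α ∈ Set.Ioo (0:ℝ) 1) (hᾱ : ᾱ ∈ Set.Ioo (0:ℝ) 1)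
    (hsuper : 0 < α + 2 * ᾱ - 1) :
    ∃ C : ℝ, 0 < C ∧
      (∀ (u : ℝ → (Fin d → ℝ) → Fin d → ℝ) (A : ℝ), 0 ≤ A →
        (Continuous fun p : ℝ × (Fin d → ℝ) => u p.1 p.2) →
        (∀ t i, SpacePeriodic fun x => u t x i) →
        WeakDivFree u →
        (∀ t ∈ Set.Icc (0:ℝ) 1, (∀ x, ‖u t x‖ ≤ A) ∧
          (∀ x y, ‖u t x - u t y‖ ≤ A * ‖x - y‖ ^ α)) →
        ∀ κ ∈ Set.Ioc (0:ℝ) 1,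
        ∀ (θin : (Fin d → ℝ) → ℝ) (θ : ℝ → (Fin d → ℝ) → ℝ) (H : ℝ),
          IsAdvDiffSol u κ θin θ →
          (∀ t ∈ Set.Icc (0:ℝ) 1, (∀ x, |θ t x| ≤ H) ∧
            (∀ x y, |θ t x - θ t y| ≤ H * ‖x - y‖ ^ ᾱ)) →
          κ * dissip θ
            ≤ C * κ ^ ((α + 2 * ᾱ - 1) / (α + 1))
                * (1 + A) ^ (2 * (1 - ᾱ) / (α + 1)) * H ^ 2) ∧
      (∀ (u : ℝ → (Fin d → ℝ) → Fin d → ℝ) (A : ℝ), 0 ≤ A →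
        (Continuous fun p : ℝ × (Fin d → ℝ) => u p.1 p.2) →
        (∀ t i, SpacePeriodic fun x => u t x i) →
        WeakDivFree u →
        (∀ t ∈ Set.Icc (0:ℝ) 1, (∀ x, ‖u t x‖ ≤ A) ∧
          (∀ x y, ‖u t x - u t y‖ ≤ A * ‖x - y‖ ^ α)) →
        ∀ (θin : (Fin d → ℝ) → ℝ) (Θ : ℝ → ℝ → (Fin d → ℝ) → ℝ) (H : ℝ),
          (∀ κ ∈ Set.Ioc (0:ℝ) 1, IsAdvDiffSol u κ θin (Θ κ) ∧
            ∀ t ∈ Set.Icc (0:ℝ) 1, (∀ x, |Θ κ t x| ≤ H) ∧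
              (∀ x y, |Θ κ t x - Θ κ t y| ≤ H * ‖x - y‖ ^ ᾱ)) →
          Filter.Tendsto (fun κ => κ * dissip (Θ κ)) (𝓝[>] (0:ℝ)) (𝓝 0)) := by
  obtain ⟨C, hC, hrigid⟩ :=
    obukhov_corrsin_rigidity_general d (Set.Ioo_subset_Icc_self hα) hᾱ.1.le
  refine ⟨C, hC, fun u A hA hu hup hdiv huα κ hκ θin θ H h hθ => ?_,
    fun u A hA hu hup hdiv huα θin Θ H hΘ => ?_⟩
  · have hH : 0 ≤ H := (abs_nonneg _).trans ((hθ 0 (by simp)).1 0)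
    exact ((hrigid u A hA hu hup hdiv fun t ht => (huα t ht).2).1 κ hκ θin θ H hH h
      fun t ht => (hθ t ht).2).2
  · have hH : 0 ≤ H := (abs_nonneg _).trans (((hΘ 1 (by simp)).2 0 (by simp)).1 0)
    exact (hrigid u A hA hu hup hdiv fun t ht => (huα t ht).2).2 hsuper (fun _ => θin) Θ H hH
      fun κ hκ => ⟨(hΘ κ hκ).1, fun t ht => ((hΘ κ hκ).2 t ht).2⟩
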